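/- Let α be a sincere pre-homogeneous dimension vector of Q and let E_1,…,E_l be the pairwise non-isomorphic ⟨α,·⟩-stable representations. Then the Schofield semi-invariants c_{E_1},…,c_{E_l} ∈ K[rep(Q,α)] are algebraically independent over K and SI(Q,α) = K[c_{E_1},…,c_{E_l}], i.e., the ring of SL(α)-invariant polynomial functions on rep(Q,α) is the polynomial ring generated by the c_{E_i}. -/

import Mathlib

set_option autoImplicit false

noncomputable section

open scoped BigOperators

/-! Basic setup for representations of a quiver with vertex set `V`, arrow set `A`,
tail map `t` and head map `h`, over a field `K`. -/

variable (K : Type) [Field K]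
variable {V A : Type} [Fintype V] [DecidableEq V] [Fintype A]

/-- The Euler form of the quiver `(V, A, t, h)`. -/
def eulerForm {R : Type} [CommRing R] (t h : A → V) (x y : V → R) : R :=
  ∑ i, x i * y i - ∑ a, x (t a) * y (h a)

def natZ (x : V → ℕ) : V → ℤ := fun i => (x i : ℤ)
def intQ (x : V → ℤ) : V → ℚ := fun i => (x i : ℚ)
def natQ (x : V → ℕ) : V → ℚ := fun i => (x i : ℚ)

/-- The weight `⟨α,·⟩`. -/
def weightL (t h : A → V) (α : V → ℤ) : V → ℤ :=
  fun i => eulerForm t h α (fun j => if j = i then 1 else 0)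

/-- The weight `−⟨·,α⟩`. -/
def weightR (t h : A → V) (α : V → ℤ) : V → ℤ :=
  fun i => - eulerForm t h (fun j => if j = i then 1 else 0) α

/-- `IsPathFrom t h i p j` : the list of arrows `p` is a path from `i` to `j`. -/
def IsPathFrom (t h : A → V) : V → List A → V → Prop
  | i, [], j => i = j
  | i, a :: p, j => t a = i ∧ IsPathFrom t h (h a) p j

/-- The quiver has no (nontrivial) oriented cycles. -/
def Acyclic (t h : A → V) : Prop := ∀ (i : V) (p : List A), IsPathFrom t h i p i → p = []

/-- The dimension vector `γ_i` of the projective indecomposable at `i`: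
`γ_i(j)` is the number of paths from `i` to `j`. -/
def gammaRoot (t h : A → V) (i : V) : V → ℕ :=
  fun j => Set.ncard {p : List A | IsPathFrom t h i p j}

/-- A finite-dimensional representation of the quiver `(V, A, t, h)` over `K`. -/
structure QuivRep (K : Type) [Field K] (V A : Type) (t h : A → V) : Type 1 where
  sp : V → Type
  [inst1 : ∀ i, AddCommGroup (sp i)]
  [inst2 : ∀ i, Module K (sp i)]
  [inst3 : ∀ i, FiniteDimensional K (sp i)]
  map : ∀ a : A, sp (t a) →ₗ[K] sp (h a)

attribute [instance] QuivRep.inst1 QuivRep.inst2 QuivRep.inst3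

namespace QuivRep

variable {K} {t h : A → V}

/-- The dimension vector of a representation. -/
def dimVec (X : QuivRep K V A t h) : V → ℕ := fun i => Module.finrank K (X.sp i)

/-- A subrepresentation. -/
structure Sub (X : QuivRep K V A t h) where
  sub : ∀ i, Submodule K (X.sp i)
  le : ∀ a : A, ∀ x ∈ sub (t a), X.map a x ∈ sub (h a)

/-- The dimension vector of a subrepresentation. -/
def Sub.dimVec {X : QuivRep K V A t h} (U : Sub X) : V → ℕ :=
  fun i => Module.finrank K (U.sub i)

/-- The space `Hom_Q(X,Y)` of morphisms of representations, as a submodule of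
`Π i, Hom_K(X(i),Y(i))`. -/
def homS (X Y : QuivRep K V A t h) : Submodule K (∀ i, X.sp i →ₗ[K] Y.sp i) where
  carrier := {φ | ∀ a : A, (φ (h a)).comp (X.map a) = (Y.map a).comp (φ (t a))}
  zero_mem' := by intro a; simp
  add_mem' := by
    intro f g hf hg a
    simp only [Pi.add_apply, LinearMap.add_comp, LinearMap.comp_add, hf a, hg a]
  smul_mem' := by
    intro c f hf a
    simp only [Pi.smul_apply, LinearMap.smul_comp, LinearMap.comp_smul, hf a]

/-- The dimension of `Hom_Q(X,Y)`. -/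
def homDim (X Y : QuivRep K V A t h) : ℕ := Module.finrank K (homS X Y)

/-- The map `d^X_Y` from Ringel's canonical exact sequence. -/
def dmap (X Y : QuivRep K V A t h) :
    (∀ i, X.sp i →ₗ[K] Y.sp i) →ₗ[K] (∀ a : A, X.sp (t a) →ₗ[K] Y.sp (h a)) where
  toFun φ := fun a => (φ (h a)).comp (X.map a) - (Y.map a).comp (φ (t a))
  map_add' f g := by
    funext a
    simp only [Pi.add_apply, LinearMap.add_comp, LinearMap.comp_add]
    abel
  map_smul' c f := by
    funext a
    simp only [Pi.smul_apply, LinearMap.smul_comp, LinearMap.comp_smul, smul_sub,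
      RingHom.id_apply]

/-- The dimension of `Ext^1_Q(X,Y)`, i.e. of the cokernel of `d^X_Y`. -/
def extDim (X Y : QuivRep K V A t h) : ℕ :=
  Module.finrank K ((∀ a : A, X.sp (t a) →ₗ[K] Y.sp (h a)) ⧸ LinearMap.range (dmap X Y))

/-- A rigid representation: `Ext^1_Q(X,X) = 0`. -/
def IsRigid (X : QuivRep K V A t h) : Prop := extDim X X = 0

/-- A Schur representation: `End_Q(X) = K·id`. -/
def IsSchur (X : QuivRep K V A t h) : Prop := homDim X X = 1

/-- An exceptional representation: rigid and Schur. -/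
def IsExceptional (X : QuivRep K V A t h) : Prop := IsRigid X ∧ IsSchur X

end QuivRep

/-- `β` is a real Schur root: the dimension vector of an exceptional representation. -/
def isRealSchurRoot (t h : A → V) (β : V → ℕ) : Prop :=
  ∃ X : QuivRep K V A t h, X.dimVec = β ∧ X.IsExceptional

/-- `ext_Q(α,β)` : the generic (minimal) value of `dim Ext^1_Q` on pairs of
representations of dimension vectors `α`, `β`. -/
def extMin (t h : A → V) (α β : V → ℕ) : ℕ :=
  sInf {n | ∃ X Y : QuivRep K V A t h, X.dimVec = α ∧ Y.dimVec = β ∧ QuivRep.extDim X Y = n}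

/-- `hom_Q(α,β)` : the generic (minimal) value of `dim Hom_Q`. -/
def homMin (t h : A → V) (α β : V → ℕ) : ℕ :=
  sInf {n | ∃ X Y : QuivRep K V A t h, X.dimVec = α ∧ Y.dimVec = β ∧ QuivRep.homDim X Y = n}

/-- `β' ↪ β` : every representation of dimension vector `β` has a subrepresentation of
dimension vector `β'`. -/
def Embeds (t h : A → V) (β' β : V → ℕ) : Prop :=
  ∀ X : QuivRep K V A t h, X.dimVec = β → ∃ U : QuivRep.Sub X, U.dimVec = β'

/-- `σ`-semi-stability of a representation. -/
def IsSemistable {t h : A → V} (σ : V → ℤ) (X : QuivRep K V A t h) : Prop :=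
  (∑ i, σ i * (X.dimVec i : ℤ)) = 0 ∧
  ∀ U : QuivRep.Sub X, (∑ i, σ i * (U.dimVec i : ℤ)) ≤ 0

/-- `σ`-stability of a representation. -/
def IsStable {t h : A → V} (σ : V → ℤ) (X : QuivRep K V A t h) : Prop :=
  (∑ i, σ i * (X.dimVec i : ℤ)) = 0 ∧ X.dimVec ≠ (fun _ => 0) ∧
  ∀ U : QuivRep.Sub X, U.dimVec ≠ (fun _ => 0) → U.dimVec ≠ X.dimVec →
    (∑ i, σ i * (U.dimVec i : ℤ)) < 0

/-- Isomorphism of representations. -/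
def RepIso {t h : A → V} (X Y : QuivRep K V A t h) : Prop :=
  ∃ e : ∀ i, X.sp i ≃ₗ[K] Y.sp i,
    ∀ (a : A) (x : X.sp (t a)), e (h a) (X.map a x) = Y.map a (e (t a) x)

/-- A quiver exceptional sequence of dimension vectors. -/
def IsQES (t h : A → V) {l : ℕ} (b : Fin l → V → ℕ) : Prop :=
  (∀ j, isRealSchurRoot K t h (b j)) ∧
  ∀ i j : Fin l, i < j →
    homMin K t h (b i) (b j) = 0 ∧ extMin K t h (b i) (b j) = 0 ∧
      eulerForm t h (natZ (b j)) (natZ (b i)) ≤ 0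

/-- The cone of nonnegative rational linear combinations of a finite set of integral
vectors. -/
def coneOf (C : Finset (V → ℤ)) : Set (V → ℚ) :=
  {x | ∃ lam : (V → ℤ) → ℚ, (∀ c, 0 ≤ lam c) ∧ x = ∑ c ∈ C, lam c • intQ c}

/-- A compatible subset of the set `Ψ(Q)_{≥ -1}` of almost positive real Schur roots. -/
def IsCompatible (t h : A → V) (C : Finset (V → ℤ)) : Prop :=
  (∀ x ∈ C, (∃ β : V → ℕ, isRealSchurRoot K t h β ∧ x = natZ β) ∨
      (∃ i : V, x = fun j => -(gammaRoot t h i j : ℤ))) ∧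
  (∀ x ∈ C, ∀ y ∈ C, x ≠ y →
    (∀ β₁ β₂ : V → ℕ, isRealSchurRoot K t h β₁ → isRealSchurRoot K t h β₂ →
      x = natZ β₁ → y = natZ β₂ → extMin K t h β₁ β₂ = 0) ∧
    (∀ (β : V → ℕ) (i : V), isRealSchurRoot K t h β →
      x = natZ β → y = (fun j => -(gammaRoot t h i j : ℤ)) → β i = 0))

/-- The domain of semi-invariants `D(β) ⊆ ℚ^{Q_0}`. -/
def Dom (t h : A → V) (β : V → ℕ) : Set (V → ℚ) :=
  {x | eulerForm t h x (natQ β) = 0 ∧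
    ∀ β' : V → ℕ, Embeds K t h β' β → eulerForm t h x (natQ β') ≤ 0}

/-- A quiver exceptional set: a subset of `Ψ(Q)_{≥ -1}` of the form
`{β_1,…,β_l, −γ_{i_{l+1}},…,−γ_{i_m}}` with `β_j(i_k) = 0` and whose real-Schur-root part
can be ordered into a quiver exceptional sequence. -/
def IsQExcSet (t h : A → V) (E : Finset (V → ℤ)) : Prop :=
  ∃ (l m : ℕ) (b : Fin l → V → ℕ) (g : Fin m → V),
    Function.Injective b ∧ Function.Injective g ∧ IsQES K t h b ∧
    (∀ j k, b j (g k) = 0) ∧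
    (E : Set (V → ℤ)) =
      (Set.range fun j => natZ (b j)) ∪
      (Set.range fun k => (fun v => -(gammaRoot t h (g k) v : ℤ)))


/-- The underlying graph of the quiver is connected. -/
def IsConnectedQuiver (t h : A → V) : Prop :=
  ∀ i j : V,
    Relation.ReflTransGen (fun u v => ∃ a, (t a = u ∧ h a = v) ∨ (t a = v ∧ h a = u)) i j

/-- Morphisms of representations. -/
structure RepHom {K : Type} [Field K] {V A : Type} {t h : A → V}
    (X Y : QuivRep K V A t h) : Type where
  app : ∀ i, X.sp i →ₗ[K] Y.sp i
  comm : ∀ a : A, (app (h a)).comp (X.map a) = (Y.map a).comp (app (t a))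

namespace RepHom

variable {K₀ : Type} [Field K₀] {t h : A → V}

/-- The identity morphism. -/
def idHom (X : QuivRep K₀ V A t h) : RepHom X X :=
  ⟨fun _ => LinearMap.id, fun a => by ext x; simp⟩

/-- Composition of morphisms. -/
def comp {X Y Z : QuivRep K₀ V A t h} (f : RepHom X Y) (g : RepHom Y Z) : RepHom X Z :=
  ⟨fun i => (g.app i).comp (f.app i), fun a => by
    ext x
    have hf := LinearMap.congr_fun (f.comm a) x
    have hg := LinearMap.congr_fun (g.comm a) (f.app (t a) x)
    simp only [LinearMap.comp_apply] at hf hg ⊢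
    rw [hf, hg]⟩

/-- Sum of morphisms. -/
def add {X Y : QuivRep K₀ V A t h} (f g : RepHom X Y) : RepHom X Y :=
  ⟨fun i => f.app i + g.app i, fun a => by
    simp only [LinearMap.add_comp, LinearMap.comp_add, f.comm a, g.comm a]⟩

/-- Scalar multiple of a morphism. -/
def smul {X Y : QuivRep K₀ V A t h} (c : K₀) (f : RepHom X Y) : RepHom X Y :=
  ⟨fun i => c • f.app i, fun a => by
    simp only [LinearMap.smul_comp, LinearMap.comp_smul, f.comm a]⟩

end RepHom

/-- The number of arrows `i → j` in the Ext-quiver `Q(𝓔)` of a sequence of dimension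
vectors: `−⟨β_i, β_j⟩` for `i ≠ j`. -/
def extMult (t h : A → V) {l : ℕ} (b : Fin l → V → ℕ) (i j : Fin l) : ℕ :=
  if i = j then 0 else (-(eulerForm t h (natZ (b i)) (natZ (b j)))).toNat

/-- The arrow set of the Ext-quiver `Q(𝓔)`. -/
abbrev ExtArrow (t h : A → V) {l : ℕ} (b : Fin l → V → ℕ) : Type :=
  (i : Fin l) × (j : Fin l) × Fin (extMult t h b i j)

/-- The representation space `rep(Q,β)` as a product of matrix spaces. -/
abbrev RepSpace (t h : A → V) (β : V → ℕ) : Type :=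
  ∀ a : A, Matrix (Fin (β (h a))) (Fin (β (t a))) K

/-- The (base-change) action of `GL(β)` on `rep(Q,β)`. -/
def glAct (t h : A → V) {β : V → ℕ}
    (g : ∀ i, Matrix.GeneralLinearGroup (Fin (β i)) K) (W : RepSpace K t h β) :
    RepSpace K t h β :=
  fun a => (g (h a) : Matrix (Fin (β (h a))) (Fin (β (h a))) K) * W a *
    (((g (t a))⁻¹ : Matrix.GeneralLinearGroup (Fin (β (t a))) K) :
      Matrix (Fin (β (t a))) (Fin (β (t a))) K)

/-- A polynomial function on `rep(Q,β)`. -/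
def IsPolyFun (t h : A → V) {β : V → ℕ} (f : RepSpace K t h β → K) : Prop :=
  ∃ P : MvPolynomial ((a : A) × (Fin (β (h a)) × Fin (β (t a)))) K,
    ∀ W, f W = MvPolynomial.eval (fun x => W x.1 x.2.1 x.2.2) P

/-- The weight space `SI(Q,β)_σ` of semi-invariant polynomial functions of weight `σ`. -/
def SIweight (t h : A → V) (β : V → ℕ) (σ : V → ℤ) :
    Submodule K (RepSpace K t h β → K) where
  carrier := {f | IsPolyFun K t h f ∧
    ∀ (g : ∀ i, Matrix.GeneralLinearGroup (Fin (β i)) K) (W : RepSpace K t h β),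
      f (glAct K t h g W) =
        (((∏ i, (Matrix.GeneralLinearGroup.det (g i)) ^ σ i : Kˣ) : K)) * f W}
  zero_mem' := by
    refine ⟨⟨0, by simp⟩, by simp⟩
  add_mem' := by
    rintro f g ⟨⟨P, hP⟩, hf⟩ ⟨⟨Q, hQ⟩, hg⟩
    refine ⟨⟨P + Q, fun W => ?_⟩, fun gg W => ?_⟩
    · simp [hP W, hQ W]
    · simp only [Pi.add_apply, hf gg W, hg gg W]; ring
  smul_mem' := by
    rintro c f ⟨⟨P, hP⟩, hf⟩
    refine ⟨⟨MvPolynomial.C c * P, fun W => ?_⟩, fun gg W => ?_⟩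
    · simp [hP W]
    · simp only [Pi.smul_apply, hf gg W, smul_eq_mul]; ring

/-- Entry of a matrix accessed through natural-number indices. -/
def entryN {m n : ℕ} (M : Matrix (Fin m) (Fin n) K) (r c : ℕ) : K :=
  if hr : r < m then (if hc : c < n then M ⟨r, hr⟩ ⟨c, hc⟩ else 0) else 0

/-- The matrix of the map `d^V_W` (with `V` of dimension vector `α` varying and `W` of
dimension vector `w` fixed), in the standard bases. -/
def schofieldMatrix (t h : A → V) {α w : V → ℕ}
    (Vm : RepSpace K t h α) (W : RepSpace K t h w) :
    Matrix ((a : A) × (Fin (w (h a)) × Fin (α (t a)))) ((i : V) × (Fin (w i) × Fin (α i))) K :=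
  fun r c =>
    (if c.1 = h r.1 ∧ (c.2.1 : ℕ) = (r.2.1 : ℕ) then
      entryN K (Vm r.1) (c.2.2 : ℕ) (r.2.2 : ℕ) else 0)
    - (if c.1 = t r.1 ∧ (c.2.2 : ℕ) = (r.2.2 : ℕ) then
      entryN K (W r.1) (r.2.1 : ℕ) (c.2.1 : ℕ) else 0)

/-- The Schofield semi-invariant `c_W : rep(Q,α) → K`, `V ↦ det d^V_W` (defined when
`⟨α, dim W⟩ = 0`, i.e. when `d^V_W` is a square matrix). -/
def schofieldSI (t h : A → V) {α w : V → ℕ} (W : RepSpace K t h w)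
    (Vm : RepSpace K t h α) : K :=
  if hc : Fintype.card ((i : V) × (Fin (w i) × Fin (α i))) =
      Fintype.card ((a : A) × (Fin (w (h a)) × Fin (α (t a)))) then
    ((schofieldMatrix K t h Vm W).submatrix (Fintype.equivOfCardEq hc) id).det
  else 0

/-- The representation of `Q` attached to a point of `rep(Q,β)`. -/
def toRep (t h : A → V) {β : V → ℕ} (W : RepSpace K t h β) : QuivRep K V A t h where
  sp i := Fin (β i) → K
  map a := Matrix.mulVecLin (W a)

/-!
Let `M` be a rigid representation of dimension vector `α`. Its orbit is dense, so a nonzero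
semi-invariant of weight `σ` does not vanish at `M` and is determined up to a scalar by `σ`, and `M`
is `-σ`-semistable by King's criterion.

In the right perpendicular category of `M`, which has the stable representations `E_j` as its simple
objects, each `E_j` has a projective cover `P_j`, obtained here as a nonzero morphism to `E_j` from
a relatively projective object of minimal dimension. As `⟨P_j, E_k⟩ = δ_jk`, the weights `⟨·, E_j⟩`
are linearly independent. A weight `τ` for which `M` is semistable is nonpositive on the `P_j`, and
`τ + ∑ τ(P_j) ⟨·, E_j⟩` vanishes on all relatively projective objects. By Bongartz completion, each
indecomposable projective representation takes the same value under it as some such object. So it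
is zero, and `τ` is an `ℕ`-combination of the `⟨·, E_j⟩`.

Hence every weight occurring in `SI(Q,α)` is the weight of a monomial in the `c_{E_j}`, which does
not vanish at `M`, so the weight spaces are spanned by such monomials. By the independence of their
weights, the restrictions of different monomials to a torus orbit of `M` are multiples of different
characters, which gives the algebraic independence.
-/

namespace QuivRep

section Morphisms

variable {K : Type} [Field K] {V A : Type} {t h : A → V} {X Y Z : QuivRep K V A t h}

/-- Families of linear maps indexed by the vertices, the source of `dmap X Y`. -/
abbrev VertexMap (X Y : QuivRep K V A t h) : Type := ∀ i, X.sp i →ₗ[K] Y.sp i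

/-- Families of linear maps indexed by the arrows, the target of `dmap X Y`. Modulo the range of
`dmap X Y` they represent `Ext¹(X, Y)`. -/
abbrev ArrowMap (X Y : QuivRep K V A t h) : Type := ∀ a, X.sp (t a) →ₗ[K] Y.sp (h a)

/-- The pointwise condition for a vertex family to be a morphism of representations. -/
def IsHom (φ : VertexMap X Y) : Prop :=
  ∀ (a : A) (x : X.sp (t a)), φ (h a) (X.map a x) = Y.map a (φ (t a) x)

/-- The vanishing of `Ext¹(X, Y)`. -/
def ExtVanishes (X Y : QuivRep K V A t h) : Prop := Function.Surjective (dmap X Y)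

/-- The vanishing of `Hom(X, Y)`. -/
def HomVanishes (X Y : QuivRep K V A t h) : Prop := ∀ φ : VertexMap X Y, IsHom φ → φ = 0

lemma dmap_apply (φ : VertexMap X Y) (a : A) (x : X.sp (t a)) :
    dmap X Y φ a x = φ (h a) (X.map a x) - Y.map a (φ (t a) x) := rfl

lemma isHom_iff_mem_homS {φ : VertexMap X Y} : IsHom φ ↔ φ ∈ homS X Y :=
  forall_congr' fun _ => ⟨fun H => LinearMap.ext fun x => H x, fun H => LinearMap.congr_fun H⟩

lemma homS_eq_ker_dmap (X Y : QuivRep K V A t h) : homS X Y = LinearMap.ker (dmap X Y) := by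
  ext φ
  rw [LinearMap.mem_ker, funext_iff]
  exact forall_congr' fun a => sub_eq_zero.symm

lemma isHom_iff_dmap_eq_zero {φ : VertexMap X Y} : IsHom φ ↔ dmap X Y φ = 0 := by
  rw [isHom_iff_mem_homS, homS_eq_ker_dmap, LinearMap.mem_ker]

lemma isHom_of_dmap_apply_eq_zero {φ : VertexMap X Y} (H : ∀ a x, dmap X Y φ a x = 0) :
    IsHom φ := fun a x => sub_eq_zero.1 (H a x)

lemma homVanishes_iff_injective_dmap : HomVanishes X Y ↔ Function.Injective (dmap X Y) := by
  rw [injective_iff_map_eq_zero]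
  exact forall_congr' fun φ => by rw [isHom_iff_dmap_eq_zero]

/-- The composition of two vertex families. -/
def VertexMap.comp (g : VertexMap Y Z) (f : VertexMap X Y) : VertexMap X Z :=
  fun i => (g i).comp (f i)

@[simp]
lemma VertexMap.comp_apply (g : VertexMap Y Z) (f : VertexMap X Y) (i : V) (x : X.sp i) :
    g.comp f i x = g i (f i x) := rfl

lemma VertexMap.exists_apply_ne_zero {f : VertexMap X Y} (hf : f ≠ 0) : ∃ i x, f i x ≠ 0 := by
  by_contra! H
  exact hf (funext fun i => LinearMap.ext (H i))

lemma IsHom.comp {g : VertexMap Y Z} {f : VertexMap X Y} (hg : IsHom g) (hf : IsHom f) :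
    IsHom (g.comp f) := fun a x => by
  rw [VertexMap.comp_apply, hf, hg, VertexMap.comp_apply]

lemma isHom_id (X : QuivRep K V A t h) : IsHom (fun _ => LinearMap.id : VertexMap X X) :=
  fun _ _ => rfl

lemma IsHom.sub {f g : VertexMap X Y} (hf : IsHom f) (hg : IsHom g) : IsHom (f - g) :=
  isHom_iff_mem_homS.2 (sub_mem (isHom_iff_mem_homS.1 hf) (isHom_iff_mem_homS.1 hg))

lemma IsHom.smul (c : K) {f : VertexMap X Y} (hf : IsHom f) : IsHom (c • f) :=
  isHom_iff_mem_homS.2 (Submodule.smul_mem _ c (isHom_iff_mem_homS.1 hf))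

lemma HomVanishes.apply_eq_zero (H : HomVanishes X Y) {φ : VertexMap X Y} (hφ : IsHom φ) (i : V)
    (x : X.sp i) : φ i x = 0 := by
  rw [H φ hφ]; rfl

lemma HomVanishes.eq_zero (H : HomVanishes X X) (i : V) (x : X.sp i) : x = 0 :=
  H.apply_eq_zero (isHom_id X) i x

lemma ExtVanishes.exists_dmap_apply_eq (H : ExtVanishes X Y) (ψ : ArrowMap X Y) :
    ∃ η : VertexMap X Y, ∀ a x, dmap X Y η a x = ψ a x := by
  obtain ⟨η, hη⟩ := H ψ
  exact ⟨η, fun a x => by rw [hη]⟩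

lemma extVanishes_iff_forall_exists :
    ExtVanishes X Y ↔
      ∀ ψ : ArrowMap X Y, ∃ η : VertexMap X Y, ∀ a x, dmap X Y η a x = ψ a x :=
  ⟨fun H ψ => H.exists_dmap_apply_eq ψ, fun H ψ =>
    let ⟨η, hη⟩ := H ψ
    ⟨η, funext fun a => LinearMap.ext (hη a)⟩⟩

lemma dmap_comp_left {g : VertexMap Y Z} (hg : IsHom g) (η : VertexMap X Y) (a : A)
    (x : X.sp (t a)) : dmap X Z (g.comp η) a x = g (h a) (dmap X Y η a x) := by
  rw [dmap_apply, dmap_apply, map_sub, hg, VertexMap.comp_apply, VertexMap.comp_apply]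

lemma dmap_comp_right {f : VertexMap X Y} (hf : IsHom f) (η : VertexMap Y Z) (a : A)
    (x : X.sp (t a)) : dmap X Z (η.comp f) a x = dmap Y Z η a (f (t a) x) := by
  rw [dmap_apply, dmap_apply, ← hf, VertexMap.comp_apply, VertexMap.comp_apply]

end Morphisms

section ShortExact

variable {K : Type} [Field K] {V A : Type} {t h : A → V} {X Y Z U W : QuivRep K V A t h}

/-- `0 → U → Y → W → 0` is a short exact sequence of representations. -/
structure IsShortExact (f : VertexMap U Y) (g : VertexMap Y W) : Prop where
  hom_left : IsHom f
  hom_right : IsHom g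
  injective : ∀ i, Function.Injective (f i)
  surjective : ∀ i, Function.Surjective (g i)
  exact : ∀ i, Function.Exact (f i) (g i)

lemma VertexMap.exists_rightInverse (g : VertexMap Y W) (hg : ∀ i, Function.Surjective (g i)) :
    ∃ s : VertexMap W Y, ∀ i w, g i (s i w) = w := by
  choose s hs using fun i => LinearMap.exists_rightInverse_of_surjective (g i)
    (LinearMap.range_eq_top.2 (hg i))
  exact ⟨s, fun i => LinearMap.congr_fun (hs i)⟩

lemma VertexMap.exists_leftInverse (f : VertexMap U Y) (hf : ∀ i, Function.Injective (f i)) :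
    ∃ s : VertexMap Y U, ∀ i u, s i (f i u) = u := by
  choose s hs using fun i => LinearMap.exists_leftInverse_of_injective (f i)
    (LinearMap.ker_eq_bot.2 (hf i))
  exact ⟨s, fun i => LinearMap.congr_fun (hs i)⟩

lemma ExtVanishes.of_surjective {g : VertexMap Y W} (hg : IsHom g)
    (hs : ∀ i, Function.Surjective (g i)) (H : ExtVanishes X Y) : ExtVanishes X W := by
  refine extVanishes_iff_forall_exists.2 fun ψ => ?_
  obtain ⟨s, hs'⟩ := g.exists_rightInverse hs
  obtain ⟨η, hη⟩ := H.exists_dmap_apply_eq fun a => (s (h a)).comp (ψ a)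
  exact ⟨g.comp η, fun a x => by rw [dmap_comp_left hg, hη, LinearMap.comp_apply, hs']⟩

lemma ExtVanishes.of_injective {f : VertexMap U Y} (hf : IsHom f)
    (hi : ∀ i, Function.Injective (f i)) (H : ExtVanishes Y Z) : ExtVanishes U Z := by
  refine extVanishes_iff_forall_exists.2 fun ψ => ?_
  obtain ⟨s, hs⟩ := f.exists_leftInverse hi
  obtain ⟨η, hη⟩ := H.exists_dmap_apply_eq fun a => (ψ a).comp (s (t a))
  exact ⟨η.comp f, fun a x => by rw [dmap_comp_right hf, hη, LinearMap.comp_apply, hs]⟩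

lemma HomVanishes.of_injective {f : VertexMap U Y} (hf : IsHom f)
    (hi : ∀ i, Function.Injective (f i)) (H : HomVanishes X Y) : HomVanishes X U := by
  refine fun φ hφ => funext fun i => LinearMap.ext fun x => hi i ?_
  exact (H.apply_eq_zero (hf.comp hφ) i x).trans (map_zero (f i)).symm

lemma HomVanishes.of_surjective {g : VertexMap Y W} (hg : IsHom g)
    (hs : ∀ i, Function.Surjective (g i)) (H : HomVanishes Y Z) : HomVanishes W Z := by
  refine fun φ hφ => funext fun i => LinearMap.ext fun x => ?_
  obtain ⟨y, rfl⟩ := hs i x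
  exact H.apply_eq_zero (hφ.comp hg) i y

namespace IsShortExact

variable {f : VertexMap U Y} {g : VertexMap Y W}

lemma apply_apply_eq_zero (S : IsShortExact f g) (i : V) (u : U.sp i) : g i (f i u) = 0 :=
  (S.exact i).apply_apply_eq_zero u

lemma exists_of_apply_eq_zero (S : IsShortExact f g) {i : V} {y : Y.sp i} (hy : g i y = 0) :
    ∃ u, f i u = y := (S.exact i y).1 hy

lemma dimVec_eq_add (S : IsShortExact f g) : Y.dimVec = U.dimVec + W.dimVec := by
  funext i
  have H := LinearMap.finrank_range_add_finrank_ker (g i)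
  rw [(S.exact i).linearMap_ker_eq, LinearMap.finrank_range_of_inj (S.injective i),
    LinearMap.range_eq_top.2 (S.surjective i), finrank_top] at H
  exact H.symm.trans (add_comm _ _)

lemma exists_factor_left (S : IsShortExact f g) (ψ : ArrowMap X Y)
    (hψ : ∀ a x, g (h a) (ψ a x) = 0) : ∃ ρ : ArrowMap X U, ∀ a x, f (h a) (ρ a x) = ψ a x := by
  obtain ⟨s, hs⟩ := f.exists_leftInverse S.injective
  refine ⟨fun a => (s (h a)).comp (ψ a), fun a x => ?_⟩
  obtain ⟨u, hu⟩ := S.exists_of_apply_eq_zero (hψ a x)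
  rw [LinearMap.comp_apply, ← hu, hs]

lemma exists_factor_right (S : IsShortExact f g) (ψ : ArrowMap Y Z)
    (hψ : ∀ a u, ψ a (f (t a) u) = 0) : ∃ ρ : ArrowMap W Z, ∀ a y, ρ a (g (t a) y) = ψ a y := by
  obtain ⟨s, hs⟩ := g.exists_rightInverse S.surjective
  refine ⟨fun a => (ψ a).comp (s (t a)), fun a y => ?_⟩
  have hy : g (t a) (s (t a) (g (t a) y) - y) = 0 := by rw [map_sub, hs, sub_self]
  obtain ⟨u, hu⟩ := S.exists_of_apply_eq_zero hy
  rw [LinearMap.comp_apply, ← sub_eq_zero, ← map_sub, ← hu, hψ]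

lemma exists_lift (S : IsShortExact f g) (H : ExtVanishes X U) {φ : VertexMap X W}
    (hφ : IsHom φ) : ∃ φ' : VertexMap X Y, IsHom φ' ∧ ∀ i x, g i (φ' i x) = φ i x := by
  obtain ⟨s, hs⟩ := g.exists_rightInverse S.surjective
  have hgs : g.comp (s.comp φ) = φ := funext fun i => LinearMap.ext fun x => hs i (φ i x)
  obtain ⟨ρ, hρ⟩ := S.exists_factor_left (dmap X Y (s.comp φ)) fun a x => by
    rw [← dmap_comp_left S.hom_right, hgs, isHom_iff_dmap_eq_zero.1 hφ]; rfl
  obtain ⟨η, hη⟩ := H.exists_dmap_apply_eq ρ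
  refine ⟨s.comp φ - f.comp η, isHom_of_dmap_apply_eq_zero fun a x => ?_, fun i x => ?_⟩
  · rw [map_sub, Pi.sub_apply, LinearMap.sub_apply, dmap_comp_left S.hom_left, hη, hρ, sub_self]
  · rw [Pi.sub_apply, LinearMap.sub_apply, map_sub, VertexMap.comp_apply, VertexMap.comp_apply, hs,
      S.apply_apply_eq_zero, sub_zero]

lemma exists_extension (S : IsShortExact f g) (H : ExtVanishes W Z) {φ : VertexMap U Z}
    (hφ : IsHom φ) : ∃ φ' : VertexMap Y Z, IsHom φ' ∧ ∀ i u, φ' i (f i u) = φ i u := by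
  obtain ⟨s, hs⟩ := f.exists_leftInverse S.injective
  have hsf : (φ.comp s).comp f = φ := funext fun i => LinearMap.ext fun u => by
    rw [VertexMap.comp_apply, VertexMap.comp_apply, hs]
  obtain ⟨ρ, hρ⟩ := S.exists_factor_right (dmap Y Z (φ.comp s)) fun a u => by
    rw [← dmap_comp_right S.hom_left, hsf, isHom_iff_dmap_eq_zero.1 hφ]; rfl
  obtain ⟨η, hη⟩ := H.exists_dmap_apply_eq ρ
  refine ⟨φ.comp s - η.comp g, isHom_of_dmap_apply_eq_zero fun a y => ?_, fun i u => ?_⟩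
  · rw [map_sub, Pi.sub_apply, LinearMap.sub_apply, dmap_comp_right S.hom_right, hη, hρ, sub_self]
  · rw [Pi.sub_apply, LinearMap.sub_apply, VertexMap.comp_apply, VertexMap.comp_apply, hs,
      S.apply_apply_eq_zero, map_zero, sub_zero]

lemma exists_descend (S : IsShortExact f g) {φ : VertexMap Y Z} (hφ : ∀ i u, φ i (f i u) = 0) :
    ∃ φ' : VertexMap W Z, ∀ i y, φ' i (g i y) = φ i y := by
  obtain ⟨s, hs⟩ := g.exists_rightInverse S.surjective
  refine ⟨φ.comp s, fun i y => ?_⟩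
  obtain ⟨u, hu⟩ := S.exists_of_apply_eq_zero (y := s i (g i y) - y) (by rw [map_sub, hs, sub_self])
  rw [VertexMap.comp_apply, ← sub_eq_zero, ← map_sub, ← hu, hφ]

lemma exists_hom_descend (S : IsShortExact f g) {φ : VertexMap Y Z} (hφ : IsHom φ)
    (hf : ∀ i u, φ i (f i u) = 0) :
    ∃ φ' : VertexMap W Z, IsHom φ' ∧ ∀ i y, φ' i (g i y) = φ i y := by
  obtain ⟨φ', hφ'⟩ := S.exists_descend hf
  refine ⟨φ', fun a w => ?_, hφ'⟩
  obtain ⟨y, rfl⟩ := S.surjective _ w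
  rw [← S.hom_right, hφ', hφ', hφ]

lemma extVanishes_middle (S : IsShortExact f g) (hU : ExtVanishes U Z) (hW : ExtVanishes W Z) :
    ExtVanishes Y Z := by
  refine extVanishes_iff_forall_exists.2 fun ψ => ?_
  obtain ⟨s, hs⟩ := f.exists_leftInverse S.injective
  obtain ⟨η, hη⟩ := hU.exists_dmap_apply_eq fun a => (ψ a).comp (f (t a))
  have hηs : (η.comp s).comp f = η := funext fun i => LinearMap.ext fun u => by
    rw [VertexMap.comp_apply, VertexMap.comp_apply, hs]
  obtain ⟨ρ, hρ⟩ := S.exists_factor_right (ψ - dmap Y Z (η.comp s)) fun a u => by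
    rw [Pi.sub_apply, LinearMap.sub_apply, ← dmap_comp_right S.hom_left, hηs, hη,
      LinearMap.comp_apply, sub_self]
  obtain ⟨ζ, hζ⟩ := hW.exists_dmap_apply_eq ρ
  refine ⟨η.comp s + ζ.comp g, fun a y => ?_⟩
  rw [map_add, Pi.add_apply, LinearMap.add_apply, dmap_comp_right S.hom_right, hζ, hρ,
    Pi.sub_apply, LinearMap.sub_apply, add_sub_cancel]

lemma extVanishes_right (S : IsShortExact f g) (hY : ExtVanishes Y Z) (hU : HomVanishes U Z) :
    ExtVanishes W Z := by
  refine extVanishes_iff_forall_exists.2 fun ψ => ?_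
  obtain ⟨η, hη⟩ := hY.exists_dmap_apply_eq fun a => (ψ a).comp (g (t a))
  have hηf : IsHom (η.comp f) := isHom_of_dmap_apply_eq_zero fun a u => by
    rw [dmap_comp_right S.hom_left, hη, LinearMap.comp_apply, S.apply_apply_eq_zero, map_zero]
  obtain ⟨η', hη'⟩ := S.exists_descend (hU.apply_eq_zero hηf)
  have hcomp : η'.comp g = η := funext fun i => LinearMap.ext (hη' i)
  refine ⟨η', fun a w => ?_⟩
  obtain ⟨y, rfl⟩ := S.surjective _ w
  rw [← dmap_comp_right S.hom_right, hcomp, hη, LinearMap.comp_apply]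

end IsShortExact

end ShortExact

section Subrepresentations

variable {K : Type} [Field K] {V A : Type} {t h : A → V} {X Y : QuivRep K V A t h}

/-- A subrepresentation, viewed as a representation. -/
def Sub.rep (U : Sub X) : QuivRep K V A t h where
  sp i := U.sub i
  map a := (X.map a).restrict (U.le a)

/-- The quotient of a representation by a subrepresentation. -/
def Sub.quot (U : Sub X) : QuivRep K V A t h where
  sp i := X.sp i ⧸ U.sub i
  map a := Submodule.mapQ _ _ (X.map a) (U.le a)

/-- The inclusion of a subrepresentation. -/
def Sub.incl (U : Sub X) : VertexMap U.rep X := fun i => (U.sub i).subtype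

/-- The projection onto the quotient by a subrepresentation. -/
def Sub.proj (U : Sub X) : VertexMap X U.quot := fun i => (U.sub i).mkQ

lemma Sub.isShortExact (U : Sub X) : IsShortExact U.incl U.proj where
  hom_left _ _ := rfl
  hom_right _ _ := rfl
  injective _ := Subtype.val_injective
  surjective _ := Submodule.mkQ_surjective _
  exact i := LinearMap.exact_subtype_mkQ (U.sub i)

lemma Sub.incl_mem (U : Sub X) (i : V) (u : U.rep.sp i) : U.incl i u ∈ U.sub i := u.2

lemma Sub.exists_incl_eq (U : Sub X) {i : V} {x : X.sp i} (hx : x ∈ U.sub i) :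
    ∃ u : U.rep.sp i, U.incl i u = x := ⟨⟨x, hx⟩, rfl⟩

lemma Sub.dimVec_eq_add (U : Sub X) : X.dimVec = U.dimVec + U.quot.dimVec :=
  U.isShortExact.dimVec_eq_add

lemma Sub.mem_of_dimVec_eq {U : Sub X} (H : U.dimVec = X.dimVec) {i : V} (x : X.sp i) :
    x ∈ U.sub i := by
  rw [Submodule.eq_top_of_finrank_eq (congrFun H i)]
  exact Submodule.mem_top

/-- The kernel of a morphism. -/
def kernel {g : VertexMap X Y} (hg : IsHom g) : Sub X where
  sub i := LinearMap.ker (g i)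
  le a x hx := by rw [LinearMap.mem_ker, hg, hx, map_zero]

/-- The image of a morphism. -/
def image {g : VertexMap X Y} (hg : IsHom g) : Sub Y where
  sub i := LinearMap.range (g i)
  le a := by
    rintro _ ⟨x, rfl⟩
    exact ⟨X.map a x, hg a x⟩

/-- A morphism, corestricted to its image. -/
def toImage {g : VertexMap X Y} (hg : IsHom g) : VertexMap X (image hg).rep :=
  fun i => (g i).rangeRestrict

lemma isShortExact_kernel_image {g : VertexMap X Y} (hg : IsHom g) :
    IsShortExact (kernel hg).incl (toImage hg) where
  hom_left _ _ := rfl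
  hom_right a x := Subtype.ext (hg a x)
  injective _ := Subtype.val_injective
  surjective i := (g i).surjective_rangeRestrict
  exact i x := by
    change (g i).rangeRestrict x = 0 ↔ _
    rw [← LinearMap.mem_ker, LinearMap.ker_rangeRestrict]
    exact ⟨fun hx => ⟨⟨x, hx⟩, rfl⟩, by rintro ⟨u, rfl⟩; exact u.2⟩

lemma isShortExact_kernel {g : VertexMap X Y} (hg : IsHom g)
    (hs : ∀ i, Function.Surjective (g i)) : IsShortExact (kernel hg).incl g where
  hom_left := (kernel hg).isShortExact.hom_left
  hom_right := hg
  injective := (kernel hg).isShortExact.injective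
  surjective := hs
  exact _ _ := ⟨fun hx => Sub.exists_incl_eq _ hx, fun ⟨u, hu⟩ => hu ▸ Sub.incl_mem _ _ u⟩

lemma dimVec_eq_kernel_add_image {g : VertexMap X Y} (hg : IsHom g) :
    X.dimVec = (kernel hg).dimVec + (image hg).dimVec :=
  (isShortExact_kernel_image hg).dimVec_eq_add

lemma dimVec_image_of_injective {f : VertexMap X Y} (hf : IsHom f)
    (hi : ∀ i, Function.Injective (f i)) : (image hf).dimVec = X.dimVec :=
  funext fun i => LinearMap.finrank_range_of_inj (hi i)

end Subrepresentations

section Dimensions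

variable {K : Type} [Field K] {V A : Type} {t h : A → V} {X Y Z U W : QuivRep K V A t h}

lemma dimVec_eq_zero_iff : X.dimVec = 0 ↔ ∀ i (x : X.sp i), x = 0 := by
  refine funext_iff.trans (forall_congr' fun i => ?_)
  exact Module.finrank_zero_iff.trans (subsingleton_iff_forall_eq 0)

lemma Sub.dimVec_eq_zero_iff {U : Sub X} : U.dimVec = 0 ↔ ∀ i, ∀ x ∈ U.sub i, x = 0 := by
  refine funext_iff.trans (forall_congr' fun i => ?_)
  exact Submodule.finrank_eq_zero.trans (Submodule.eq_bot_iff _)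

lemma image_dimVec_ne_zero {f : VertexMap X Y} (hf : IsHom f) (h0 : f ≠ 0) :
    (image hf).dimVec ≠ 0 := by
  obtain ⟨i, x, hx⟩ := VertexMap.exists_apply_ne_zero h0
  exact fun H => hx (Sub.dimVec_eq_zero_iff.1 H i _ ⟨x, rfl⟩)

lemma exists_isHom_ne_zero_of_repIso (H : RepIso K X Y) (h0 : X.dimVec ≠ 0) :
    ∃ f : VertexMap X Y, IsHom f ∧ f ≠ 0 := by
  obtain ⟨e, he⟩ := H
  refine ⟨fun i => (e i).toLinearMap, he, fun hz => h0 (dimVec_eq_zero_iff.2 fun i x => ?_)⟩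
  exact (e i).map_eq_zero_iff.1 (LinearMap.congr_fun (congrFun hz i) x)

lemma homDim_eq_zero_iff [Finite V] : homDim X Y = 0 ↔ HomVanishes X Y := by
  rw [homDim, Submodule.finrank_eq_zero, homS_eq_ker_dmap, homVanishes_iff_injective_dmap,
    LinearMap.ker_eq_bot]

lemma dimVec_toRep {β : V → ℕ} (W : RepSpace K t h β) : (toRep K t h W).dimVec = β :=
  funext fun _ => Module.finrank_fin_fun K

variable [Fintype V]

/-- The total dimension of a representation. -/
def totalDim (X : QuivRep K V A t h) : ℕ := ∑ i, X.dimVec i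

/-- The value of the weight `σ` on (the dimension vector of) a representation. -/
def weightValue (σ : V → ℤ) (X : QuivRep K V A t h) : ℤ := ∑ i, σ i * (X.dimVec i : ℤ)

lemma totalDim_eq_zero_iff : totalDim X = 0 ↔ X.dimVec = 0 := by
  simp only [totalDim, Finset.sum_eq_zero_iff, Finset.mem_univ, true_implies, funext_iff,
    Pi.zero_apply]

lemma totalDim_congr (H : X.dimVec = Y.dimVec) : totalDim X = totalDim Y := by
  rw [totalDim, totalDim, H]

lemma totalDim_eq_add (H : Y.dimVec = U.dimVec + W.dimVec) :
    totalDim Y = totalDim U + totalDim W := by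
  simp only [totalDim, H, Pi.add_apply, Finset.sum_add_distrib]

lemma totalDim_kernel_lt {f : VertexMap X Y} (hf : IsHom f) (h0 : f ≠ 0) :
    totalDim (kernel hf).rep < totalDim X := by
  have hadd : totalDim X = totalDim (kernel hf).rep + totalDim (image hf).rep :=
    totalDim_eq_add (dimVec_eq_kernel_add_image hf)
  have hpos := mt (totalDim_eq_zero_iff (X := (image hf).rep)).1 (image_dimVec_ne_zero hf h0)
  omega

lemma weightValue_congr {σ : V → ℤ} (H : X.dimVec = Y.dimVec) :
    weightValue σ X = weightValue σ Y := by
  rw [weightValue, weightValue, H]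

lemma weightValue_add_sum_smul {ι : Type} (s : Finset ι) (σ : V → ℤ) (c : ι → ℤ) (ρ : ι → V → ℤ)
    (X : QuivRep K V A t h) :
    weightValue (σ + ∑ k ∈ s, c k • ρ k) X =
      weightValue σ X + ∑ k ∈ s, c k * weightValue (ρ k) X := by
  simp only [weightValue, Pi.add_apply, Finset.sum_apply, Pi.smul_apply, smul_eq_mul, add_mul,
    Finset.sum_add_distrib, Finset.sum_mul, Finset.mul_sum, mul_assoc]
  rw [Finset.sum_comm]

lemma weightValue_eq_add {σ : V → ℤ} (H : Y.dimVec = U.dimVec + W.dimVec) :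
    weightValue σ Y = weightValue σ U + weightValue σ W := by
  simp only [weightValue, H, Pi.add_apply, Nat.cast_add, mul_add, Finset.sum_add_distrib]

variable [Fintype A]

/-- The Euler form `⟨dim X, dim Y⟩`. -/
def euler (X Y : QuivRep K V A t h) : ℤ := eulerForm t h (natZ X.dimVec) (natZ Y.dimVec)

lemma euler_congr_right (H : Y.dimVec = Z.dimVec) : euler X Y = euler X Z := by
  rw [euler, euler, H]

lemma euler_eq_add_right (H : Y.dimVec = U.dimVec + W.dimVec) :
    euler X Y = euler X U + euler X W := by
  simp only [euler, eulerForm, natZ, H, Pi.add_apply, Nat.cast_add, mul_add,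
    Finset.sum_add_distrib]
  ring

lemma euler_eq_finrank_sub_finrank (X Y : QuivRep K V A t h) :
    euler X Y =
      (Module.finrank K (VertexMap X Y) : ℤ) - (Module.finrank K (ArrowMap X Y) : ℤ) := by
  simp only [Module.finrank_pi_fintype, Module.finrank_linearMap, euler, eulerForm, natZ, dimVec,
    Nat.cast_sum, Nat.cast_mul]

lemma ExtVanishes.euler_eq (H : ExtVanishes X Y) : euler X Y = homDim X Y := by
  have hrank := LinearMap.finrank_range_add_finrank_ker (dmap X Y)
  rw [LinearMap.range_eq_top.2 H, finrank_top, ← homS_eq_ker_dmap] at hrank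
  rw [euler_eq_finrank_sub_finrank, homDim, ← hrank, Nat.cast_add, add_sub_cancel_left]

lemma ExtVanishes.euler_nonneg (H : ExtVanishes X Y) : 0 ≤ euler X Y := by
  rw [H.euler_eq]
  exact Int.natCast_nonneg _

lemma HomVanishes.euler_nonpos (H : HomVanishes X Y) : euler X Y ≤ 0 := by
  rw [euler_eq_finrank_sub_finrank, sub_nonpos, Nat.cast_le]
  exact LinearMap.finrank_le_finrank_of_injective (homVanishes_iff_injective_dmap.1 H)

lemma HomVanishes.extVanishes (H : HomVanishes X Y) (h0 : euler X Y = 0) : ExtVanishes X Y := by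
  rw [euler_eq_finrank_sub_finrank, sub_eq_zero, Nat.cast_inj] at h0
  exact (LinearMap.injective_iff_surjective_of_finrank_eq_finrank h0).1
    (homVanishes_iff_injective_dmap.1 H)

lemma ExtVanishes.homVanishes (H : ExtVanishes X Y) (h0 : euler X Y = 0) : HomVanishes X Y := by
  rwa [H.euler_eq, Nat.cast_eq_zero, homDim_eq_zero_iff] at h0

lemma euler_eq_zero (H : HomVanishes X Y) (H' : ExtVanishes X Y) : euler X Y = 0 :=
  le_antisymm H.euler_nonpos H'.euler_nonneg

variable [DecidableEq V]

lemma weightL_apply (x : V → ℤ) (i : V) :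
    weightL t h x i = x i - ∑ a, if h a = i then x (t a) else 0 := by
  simp only [weightL, eulerForm, mul_ite, mul_one, mul_zero, Finset.sum_ite_eq', Finset.mem_univ,
    if_true]

lemma sum_weightL_mul (x y : V → ℤ) : ∑ i, weightL t h x i * y i = eulerForm t h x y := by
  simp only [weightL_apply, sub_mul, Finset.sum_sub_distrib, Finset.sum_mul, ite_mul, zero_mul,
    eulerForm]
  rw [Finset.sum_comm]
  simp only [Finset.sum_ite_eq, Finset.mem_univ, if_true]

lemma weightValue_weightL (X Y : QuivRep K V A t h) :
    weightValue (weightL t h (natZ X.dimVec)) Y = euler X Y :=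
  sum_weightL_mul _ _

/-- The simple representation at the vertex `i`. -/
def simple (K : Type) [Field K] (t h : A → V) (i : V) : QuivRep K V A t h :=
  toRep K t h (β := Pi.single i 1) 0

lemma euler_simple (X : QuivRep K V A t h) (i : V) :
    euler X (simple K t h i) = weightL t h (natZ X.dimVec) i := by
  rw [euler, simple, dimVec_toRep]
  congr 1
  funext j
  rw [natZ, Pi.single_apply, Nat.cast_ite, Nat.cast_one, Nat.cast_zero]

end Dimensions

section Powers

variable {K : Type} [Field K] {V A : Type} {t h : A → V} {X Y Z : QuivRep K V A t h} {n : ℕ}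

/-- The direct sum of `n` copies of `X`. -/
def pow (X : QuivRep K V A t h) (n : ℕ) : QuivRep K V A t h where
  sp i := Fin n → X.sp i
  map a := LinearMap.pi fun k => (X.map a).comp (LinearMap.proj k)

/-- The projection of `X^n` onto the `k`-th summand. -/
def powProj (X : QuivRep K V A t h) (k : Fin n) : VertexMap (pow X n) X :=
  fun _ => LinearMap.proj k

/-- The inclusion of the `k`-th summand into `X^n`. -/
def powIncl (X : QuivRep K V A t h) (k : Fin n) : VertexMap X (pow X n) :=
  fun i => LinearMap.single K (fun _ => X.sp i) k

/-- The morphism to a power with components `f k`. -/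
def toPow (f : Fin n → VertexMap Y X) : VertexMap Y (pow X n) :=
  fun i => LinearMap.pi fun k => f k i

/-- The morphism from a power with components `f k`. -/
def fromPow (f : Fin n → VertexMap X Y) : VertexMap (pow X n) Y :=
  fun i => ∑ k, (f k i).comp (LinearMap.proj k)

lemma isHom_powProj (X : QuivRep K V A t h) (k : Fin n) : IsHom (powProj X k) :=
  fun _ _ => rfl

lemma isHom_powIncl (X : QuivRep K V A t h) (k : Fin n) : IsHom (powIncl X k) := fun a x =>
  funext fun j => (Pi.apply_single (fun _ => X.map a) (fun _ => map_zero _) k x j).symm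

lemma isHom_toPow {f : Fin n → VertexMap Y X} (hf : ∀ k, IsHom (f k)) : IsHom (toPow f) :=
  fun a x => funext fun k => hf k a x

lemma powProj_toPow (f : Fin n → VertexMap Y X) (k : Fin n) (i : V) (y : Y.sp i) :
    powProj X k i (toPow f i y) = f k i y := rfl

lemma fromPow_apply (f : Fin n → VertexMap X Y) (i : V) (x : (pow X n).sp i) :
    fromPow f i x = ∑ k, f k i (powProj X k i x) :=
  LinearMap.sum_apply _ _ _

lemma isHom_fromPow {f : Fin n → VertexMap X Y} (hf : ∀ k, IsHom (f k)) : IsHom (fromPow f) := by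
  intro a x
  rw [fromPow_apply, fromPow_apply, map_sum]
  exact Finset.sum_congr rfl fun k _ => by rw [← hf k, isHom_powProj]

lemma fromPow_powIncl (f : Fin n → VertexMap X Y) (k : Fin n) (i : V) (x : X.sp i) :
    fromPow f i (powIncl X k i x) = f k i x := by
  rw [fromPow_apply, Finset.sum_eq_single k]
  · exact congrArg (f k i) (Pi.single_eq_same (M := fun _ => X.sp i) k x)
  · intro j _ hj
    exact (congrArg (f j i) (Pi.single_eq_of_ne (M := fun _ => X.sp i) hj x)).trans (map_zero _)
  · exact fun hk => absurd (Finset.mem_univ k) hk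

lemma pow_ext {i : V} {x y : (pow X n).sp i} (H : ∀ k, powProj X k i x = powProj X k i y) :
    x = y := funext H

lemma sum_powIncl_powProj {i : V} (x : (pow X n).sp i) :
    ∑ k, powIncl X k i (powProj X k i x) = x :=
  Finset.univ_sum_single (M := fun _ : Fin n => X.sp i) x

lemma ExtVanishes.pow_right (n : ℕ) (H : ExtVanishes Y X) : ExtVanishes Y (pow X n) := by
  refine extVanishes_iff_forall_exists.2 fun ψ => ?_
  choose η hη using fun k : Fin n => H.exists_dmap_apply_eq fun a => (powProj X k (h a)).comp (ψ a)
  exact ⟨toPow η, fun a x => pow_ext fun k => hη k a x⟩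

lemma ExtVanishes.pow_left (n : ℕ) (H : ExtVanishes X Z) : ExtVanishes (pow X n) Z := by
  refine extVanishes_iff_forall_exists.2 fun ψ => ?_
  choose η hη using fun k : Fin n => H.exists_dmap_apply_eq fun a => (ψ a).comp (powIncl X k (t a))
  have hcomp (k : Fin n) : (fromPow η).comp (powIncl X k) = η k :=
    funext fun i => LinearMap.ext fun x => fromPow_powIncl η k i x
  refine ⟨fromPow η, fun a x => ?_⟩
  rw [← sum_powIncl_powProj x, map_sum, map_sum]
  refine Finset.sum_congr rfl fun k _ => ?_
  rw [← dmap_comp_right (isHom_powIncl X k), hcomp, hη, LinearMap.comp_apply]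

lemma HomVanishes.pow_left (n : ℕ) (H : HomVanishes X Z) : HomVanishes (pow X n) Z := by
  refine fun φ hφ => funext fun i => LinearMap.ext fun x => ?_
  rw [← sum_powIncl_powProj x, map_sum]
  exact Finset.sum_eq_zero fun k _ => H.apply_eq_zero (hφ.comp (isHom_powIncl X k)) i _

lemma dimVec_pow (X : QuivRep K V A t h) (n : ℕ) (i : V) :
    (pow X n).dimVec i = n * X.dimVec i := by
  refine (Module.finrank_pi_fintype K).trans ?_
  rw [Finset.sum_const, Finset.card_univ, Fintype.card_fin, smul_eq_mul, dimVec]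

end Powers

section Trace

variable {K : Type} [Field K] {V A : Type} [Finite V] {t h : A → V} {X Y Z M : QuivRep K V A t h}

/-- A basis of the space of morphisms from `X` to `Y`. -/
def homBasis (X Y : QuivRep K V A t h) (k : Fin (homDim X Y)) : VertexMap X Y :=
  (Module.finBasis K (homS X Y) k).1

lemma isHom_homBasis (X Y : QuivRep K V A t h) (k : Fin (homDim X Y)) : IsHom (homBasis X Y k) :=
  isHom_iff_mem_homS.2 (Module.finBasis K (homS X Y) k).2

lemma IsHom.exists_eq_sum_homBasis {φ : VertexMap X Y} (hφ : IsHom φ) :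
    ∃ c : Fin (homDim X Y) → K, ∀ i x, φ i x = ∑ k, c k • homBasis X Y k i x := by
  let φ' : homS X Y := ⟨φ, isHom_iff_mem_homS.1 hφ⟩
  refine ⟨(Module.finBasis K (homS X Y)).repr φ', fun i x => ?_⟩
  have hsum := congrArg Subtype.val ((Module.finBasis K (homS X Y)).sum_repr φ')
  rw [Submodule.coe_sum] at hsum
  conv_lhs => rw [show φ = φ'.1 from rfl, ← hsum, Finset.sum_apply, LinearMap.sum_apply]
  rfl

/-- The universal morphism from a power of `X` to `M`. -/
def evaluation (X M : QuivRep K V A t h) : VertexMap (pow X (homDim X M)) M :=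
  fromPow (homBasis X M)

lemma isHom_evaluation (X M : QuivRep K V A t h) : IsHom (evaluation X M) :=
  isHom_fromPow (isHom_homBasis X M)

/-- The universal morphism from `M` to a power of `X`; its kernel is the reject of `X` in `M`. -/
def coevaluation (X M : QuivRep K V A t h) : VertexMap M (pow X (homDim M X)) :=
  toPow (homBasis M X)

lemma isHom_coevaluation (X M : QuivRep K V A t h) : IsHom (coevaluation X M) :=
  isHom_toPow (isHom_homBasis M X)

lemma coevaluation_apply_eq_zero_iff {i : V} {m : M.sp i} :
    coevaluation X M i m = 0 ↔ ∀ φ : VertexMap M X, IsHom φ → φ i m = 0 := by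
  refine ⟨fun hm φ hφ => ?_, fun H => pow_ext fun k => ?_⟩
  · obtain ⟨c, hc⟩ := hφ.exists_eq_sum_homBasis
    rw [hc]
    refine Finset.sum_eq_zero fun k _ => ?_
    rw [← powProj_toPow (homBasis M X), ← coevaluation, hm, map_zero, smul_zero]
  · rw [map_zero]
    exact H _ (isHom_homBasis M X k)

/-- The trace of `X` in `M`: the sum of the images of all morphisms from `X` to `M`. -/
def trace (X M : QuivRep K V A t h) : Sub M := image (isHom_evaluation X M)

lemma IsHom.apply_mem_trace {φ : VertexMap X M} (hφ : IsHom φ) (i : V) (x : X.sp i) :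
    φ i x ∈ (trace X M).sub i := by
  obtain ⟨c, hc⟩ := hφ.exists_eq_sum_homBasis
  rw [hc]
  exact Submodule.sum_mem _ fun k _ => Submodule.smul_mem _ _
    ⟨powIncl X k i x, fromPow_powIncl _ _ _ _⟩

lemma ExtVanishes.trace (H : ExtVanishes Y X) : ExtVanishes Y (trace X M).rep :=
  (H.pow_right _).of_surjective (isShortExact_kernel_image (isHom_evaluation X M)).hom_right
    (isShortExact_kernel_image _).surjective

lemma HomVanishes.trace (H : HomVanishes X Z) : HomVanishes (trace X M).rep Z :=
  (H.pow_left _).of_surjective (isShortExact_kernel_image (isHom_evaluation X M)).hom_right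
    (isShortExact_kernel_image _).surjective

end Trace

section Cogeneration

variable {K : Type} [Field K] {V A : Type} {t h : A → V} {X Y M U W P : QuivRep K V A t h}

/-- `M` is cogenerated by `X`, i.e. embeds into a power of `X`. -/
def Cogen (X M : QuivRep K V A t h) : Prop :=
  ∀ i (m : M.sp i), (∀ φ : VertexMap M X, IsHom φ → φ i m = 0) → m = 0

lemma Cogen.of_injective (H : Cogen X M) {f : VertexMap U M} (hf : IsHom f)
    (hi : ∀ i, Function.Injective (f i)) : Cogen X U := fun i _ hu =>
  (map_eq_zero_iff (f i) (hi i)).1 (H i _ fun _ hφ => hu _ (hφ.comp hf))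

lemma cogen_pow (X : QuivRep K V A t h) (n : ℕ) : Cogen X (pow X n) := fun _ _ hm =>
  pow_ext fun k => (hm _ (isHom_powProj X k)).trans (map_zero _).symm

lemma IsShortExact.cogen_middle {f : VertexMap U Y} {g : VertexMap Y W} (S : IsShortExact f g)
    (hU : Cogen X U) (hW : Cogen X W) (hWX : ExtVanishes W X) : Cogen X Y := by
  intro i y hy
  obtain ⟨u, rfl⟩ := S.exists_of_apply_eq_zero
    (hW i (g i y) fun φ hφ => hy _ (hφ.comp S.hom_right))
  rw [hU i u fun φ hφ => ?_, map_zero]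
  obtain ⟨φ', hφ', hφ'f⟩ := S.exists_extension hWX hφ
  rw [← hφ'f, hy φ' hφ']

lemma HomVanishes.of_ker_coevaluation [Finite V] (hX : ExtVanishes X X) :
    HomVanishes (kernel (isHom_coevaluation X M)).rep X := by
  intro φ hφ
  have S := isShortExact_kernel_image (isHom_coevaluation X M)
  have hext : ExtVanishes (image (isHom_coevaluation X M)).rep X :=
    (hX.pow_left _).of_injective (Sub.isShortExact _).hom_left (Sub.isShortExact _).injective
  obtain ⟨φ', hφ', hφ'f⟩ := S.exists_extension hext hφ
  refine funext fun i => LinearMap.ext fun u => ?_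
  rw [← hφ'f]
  exact coevaluation_apply_eq_zero_iff.1 u.2 φ' hφ'

variable [Finite V] [Finite A]

/- Pairing a projective representation with the simple ones shows that `⟨P, Y⟩` is a combination of
the `dim Y(i)` with nonnegative coefficients. -/
lemma homVanishes_self_of_homVanishes_sincere (hX : ∀ i, 0 < X.dimVec i)
    (hP : ∀ Z, ExtVanishes P Z) (H : HomVanishes P X) : HomVanishes P P := by
  classical
  have := Fintype.ofFinite V
  have := Fintype.ofFinite A
  have hnonneg (i : V) : 0 ≤ weightL t h (natZ P.dimVec) i :=
    euler_simple P i ▸ (hP (simple K t h i)).euler_nonneg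
  have hsum : ∑ i, weightL t h (natZ P.dimVec) i * (X.dimVec i : ℤ) = 0 :=
    (weightValue_weightL P X).trans (euler_eq_zero H (hP X))
  rw [Finset.sum_eq_zero_iff_of_nonneg fun i _ => mul_nonneg (hnonneg i) (Int.natCast_nonneg _)]
    at hsum
  have hweight (i : V) : weightL t h (natZ P.dimVec) i = 0 :=
    (mul_eq_zero.1 (hsum i (Finset.mem_univ i))).resolve_right (Nat.cast_ne_zero.2 (hX i).ne')
  refine (hP P).homVanishes ?_
  rw [← weightValue_weightL, weightValue]
  exact Finset.sum_eq_zero fun i _ => by rw [hweight, zero_mul]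

lemma cogen_of_sincere (hs : ∀ i, 0 < X.dimVec i) (hX : ExtVanishes X X)
    (hP : ∀ Z, ExtVanishes P Z) : Cogen X P := by
  have S := (kernel (isHom_coevaluation X P)).isShortExact
  have hK (Z : QuivRep K V A t h) : ExtVanishes (kernel (isHom_coevaluation X P)).rep Z :=
    (hP Z).of_injective S.hom_left S.injective
  have hzero := homVanishes_self_of_homVanishes_sincere hs hK (.of_ker_coevaluation hX)
  intro i p hp
  obtain ⟨u, rfl⟩ := Sub.exists_incl_eq (kernel (isHom_coevaluation X P))
    (coevaluation_apply_eq_zero_iff.2 hp)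
  rw [hzero.eq_zero i u, map_zero]

end Cogeneration

section UniversalExtension

variable {K : Type} [Field K] {V A : Type} {t h : A → V} {X P W : QuivRep K V A t h}

/-- The extension of `W` by `P` defined by the cocycle `ξ`. -/
def extension (ξ : ArrowMap W P) : QuivRep K V A t h where
  sp i := P.sp i × W.sp i
  map a := ((P.map a).coprod (ξ a)).prod ((W.map a).comp (LinearMap.snd K _ _))

lemma isShortExact_extension (ξ : ArrowMap W P) :
    IsShortExact (Y := extension ξ) (fun _ => LinearMap.inl K _ _)
      (fun _ => LinearMap.snd K _ _) where
  hom_left a p := Prod.ext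
    ((add_zero (P.map a p)).symm.trans (congrArg _ (map_zero (ξ a)).symm)) (map_zero (W.map a)).symm
  hom_right _ _ := rfl
  injective _ := LinearMap.inl_injective
  surjective _ := LinearMap.snd_surjective
  exact _ := .inl_snd

lemma extVanishes_extension {ξ : ArrowMap W P} (hW : ExtVanishes X W)
    (hξ : ∀ ψ : ArrowMap X P, ∃ ζ : VertexMap X W, IsHom ζ ∧ ∀ a x, ξ a (ζ (t a) x) = ψ a x) :
    ExtVanishes X (extension ξ) := by
  refine extVanishes_iff_forall_exists.2 fun ψ => ?_
  let r : ∀ i, (extension ξ).sp i →ₗ[K] P.sp i := fun _ => LinearMap.fst K _ _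
  let q : ∀ i, (extension ξ).sp i →ₗ[K] W.sp i := fun _ => LinearMap.snd K _ _
  let s : ∀ i, W.sp i →ₗ[K] (extension ξ).sp i := fun _ => LinearMap.inr K _ _
  obtain ⟨η, hη⟩ := hW.exists_dmap_apply_eq fun a => (q _).comp (ψ a)
  obtain ⟨ζ, hζ, hζξ⟩ := hξ fun a => -((r _).comp (ψ a) + (ξ a).comp (η (t a)))
  refine ⟨fun i => (s i).comp ((η + ζ) i), fun a x => Prod.ext ?_ ?_⟩
  · change 0 - (P.map a 0 + ξ a (η (t a) x + ζ (t a) x)) = r _ (ψ a x)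
    rw [map_zero, zero_add, map_add, hζξ, LinearMap.neg_apply, LinearMap.add_apply,
      LinearMap.comp_apply, LinearMap.comp_apply]
    abel
  · change dmap X W (η + ζ) a x = q _ (ψ a x)
    rw [map_add, isHom_iff_dmap_eq_zero.1 hζ, add_zero, hη, LinearMap.comp_apply]

lemma exists_universal_cocycle [Finite A] (X P : QuivRep K V A t h) :
    ∃ (n : ℕ) (ξ : ArrowMap (pow X n) P), ∀ ψ : ArrowMap X P,
      ∃ ζ : VertexMap X (pow X n), IsHom ζ ∧ ∀ a x, ξ a (ζ (t a) x) = ψ a x := by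
  let b := Module.finBasis K (ArrowMap X P)
  refine ⟨_, fun a => ∑ k, (b k a).comp (powProj X k (t a)), fun ψ =>
    ⟨toPow fun k => b.repr ψ k • (fun _ => LinearMap.id : VertexMap X X),
      isHom_toPow fun k => (isHom_id X).smul _, fun a x => ?_⟩⟩
  conv_rhs => rw [← b.sum_repr ψ, Finset.sum_apply, LinearMap.sum_apply]
  rw [LinearMap.sum_apply]
  exact Finset.sum_congr rfl fun k _ => map_smul (b k a) _ _

lemma exists_universal_extension [Finite A] (hX : ExtVanishes X X) (P : QuivRep K V A t h) :
    ∃ (n : ℕ) (Y : QuivRep K V A t h) (f : VertexMap P Y) (g : VertexMap Y (pow X n)),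
      IsShortExact f g ∧ ExtVanishes X Y := by
  obtain ⟨n, ξ, hξ⟩ := exists_universal_cocycle X P
  exact ⟨n, extension ξ, _, _, isShortExact_extension ξ, extVanishes_extension (hX.pow_right n) hξ⟩

end UniversalExtension

section Stability

variable {K : Type} [Field K] {V A : Type} [Fintype V] [Fintype A] {t h : A → V}
  {X Y Z S R : QuivRep K V A t h}

/-- `Z` belongs to the right perpendicular category of `X`. -/
structure IsPerp (X Z : QuivRep K V A t h) : Prop where
  homVanishes : HomVanishes X Z
  extVanishes : ExtVanishes X Z

lemma IsPerp.euler_eq_zero (hZ : IsPerp X Z) : euler X Z = 0 :=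
  QuivRep.euler_eq_zero hZ.homVanishes hZ.extVanishes

lemma IsPerp.sub (hZ : IsPerp X Z) (U : Sub Z) (hU : euler X U.rep = 0) : IsPerp X U.rep :=
  have H := hZ.homVanishes.of_injective U.isShortExact.hom_left U.isShortExact.injective
  ⟨H, H.extVanishes hU⟩

lemma IsPerp.quot (hZ : IsPerp X Z) (U : Sub Z) (hU : euler X U.rep = 0) : IsPerp X U.quot := by
  have H : ExtVanishes X U.quot :=
    hZ.extVanishes.of_surjective U.isShortExact.hom_right U.isShortExact.surjective
  have hadd : euler X Z = euler X U.rep + euler X U.quot := euler_eq_add_right U.dimVec_eq_add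
  exact ⟨H.homVanishes (by linarith [hZ.euler_eq_zero]), H⟩

lemma IsPerp.kernel (hZ : IsPerp X Z) {f : VertexMap Z S} (hf : IsHom f)
    (hs : ∀ i, Function.Surjective (f i)) (hS : euler X S = 0) : IsPerp X (kernel hf).rep := by
  have hadd : euler X Z = euler X (QuivRep.kernel hf).rep + euler X S :=
    euler_eq_add_right (isShortExact_kernel hf hs).dimVec_eq_add
  exact hZ.sub _ (by linarith [hZ.euler_eq_zero])

variable [DecidableEq V]

/-- Stability of `Z` with respect to the weight `⟨X, ·⟩`. -/
def IsStableFor (X Z : QuivRep K V A t h) : Prop :=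
  IsStable K (weightL t h (natZ X.dimVec)) Z

lemma IsStableFor.euler_eq_zero (hS : IsStableFor X S) : euler X S = 0 :=
  (weightValue_weightL X S).symm.trans hS.1

lemma IsStableFor.dimVec_ne_zero (hS : IsStableFor X S) : S.dimVec ≠ 0 := hS.2.1

lemma IsStableFor.dimVec_eq_zero_or_eq (hS : IsStableFor X S) {U : Sub S}
    (hU : 0 ≤ euler X U.rep) : U.dimVec = 0 ∨ U.dimVec = S.dimVec := by
  by_contra! hne
  have hneg := hS.2.2 U hne.1 hne.2
  rw [← weightValue_weightL] at hU
  exact hneg.not_ge hU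

lemma isStableFor_of_euler_neg (h0 : euler X Z = 0) (hZ : Z.dimVec ≠ 0)
    (H : ∀ U : Sub Z, U.dimVec ≠ 0 → U.dimVec ≠ Z.dimVec → euler X U.rep < 0) :
    IsStableFor X Z :=
  ⟨(weightValue_weightL X Z).trans h0, hZ, fun U hU hU' =>
    (weightValue_weightL X U.rep).trans_lt (H U hU hU')⟩

/- If the trace of `X` were all of `S`, it would be a quotient of a power of `X` admitting no
nonzero morphism from `X`. -/
lemma IsStableFor.trace_dimVec_eq_zero (hX : ExtVanishes X X) (hS : IsStableFor X S) :
    (trace X S).dimVec = 0 := by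
  have hT : ExtVanishes X (trace X S).rep := hX.trace
  refine (hS.dimVec_eq_zero_or_eq hT.euler_nonneg).elim id fun heq => ?_
  have hT0 : HomVanishes X (trace X S).rep :=
    hT.homVanishes ((euler_congr_right (Y := (trace X S).rep) heq).trans hS.euler_eq_zero)
  exact dimVec_eq_zero_iff.2 hT0.trace.eq_zero

lemma IsStableFor.isPerp (hX : ExtVanishes X X) (hS : IsStableFor X S) : IsPerp X S := by
  have H : HomVanishes X S := fun φ hφ => funext fun i => LinearMap.ext fun x =>
    Sub.dimVec_eq_zero_iff.1 (hS.trace_dimVec_eq_zero hX) i _ (hφ.apply_mem_trace i x)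
  exact ⟨H, H.extVanishes hS.euler_eq_zero⟩

lemma IsStableFor.surjective (hS : IsStableFor X S) (hZ : ExtVanishes X Z) {f : VertexMap Z S}
    (hf : IsHom f) (h0 : f ≠ 0) (i : V) : Function.Surjective (f i) := by
  have himage : ExtVanishes X (image hf).rep :=
    hZ.of_surjective (isShortExact_kernel_image hf).hom_right
      (isShortExact_kernel_image hf).surjective
  have heq := (hS.dimVec_eq_zero_or_eq himage.euler_nonneg).resolve_left
    (image_dimVec_ne_zero hf h0)
  exact fun y => Sub.mem_of_dimVec_eq heq y

lemma IsStableFor.injective (hS : IsStableFor X S) (hR : IsStableFor X R) (hX : ExtVanishes X X)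
    {θ : VertexMap S R} (hθ : IsHom θ) (h0 : θ ≠ 0) (i : V) : Function.Injective (θ i) := by
  have hker : IsPerp X (kernel hθ).rep := (hS.isPerp hX).kernel hθ
    (hR.surjective (hS.isPerp hX).extVanishes hθ h0) hR.euler_eq_zero
  have hzero : (kernel hθ).dimVec = 0 :=
    (hS.dimVec_eq_zero_or_eq hker.euler_eq_zero.ge).resolve_right fun heq =>
      (totalDim_kernel_lt hθ h0).ne (totalDim_congr heq)
  exact (injective_iff_map_eq_zero _).2 (Sub.dimVec_eq_zero_iff.1 hzero i)

lemma IsStableFor.repIso (hS : IsStableFor X S) (hR : IsStableFor X R) (hX : ExtVanishes X X)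
    {θ : VertexMap S R} (hθ : IsHom θ) (h0 : θ ≠ 0) : RepIso K S R :=
  ⟨fun i => LinearEquiv.ofBijective (θ i) ⟨hS.injective hR hX hθ h0 i,
    hR.surjective (hS.isPerp hX).extVanishes hθ h0 i⟩, hθ⟩

lemma IsStableFor.exists_eq_smul_id [IsAlgClosed K] (hS : IsStableFor X S) (hX : ExtVanishes X X)
    {θ : VertexMap S S} (hθ : IsHom θ) :
    ∃ c : K, θ = c • (fun _ => LinearMap.id : VertexMap S S) := by
  obtain ⟨i, hi⟩ := Function.ne_iff.1 hS.dimVec_ne_zero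
  have : Nontrivial (S.sp i) := Module.nontrivial_of_finrank_pos (Nat.pos_of_ne_zero hi)
  obtain ⟨c, hc⟩ := Module.End.exists_eigenvalue (θ i)
  obtain ⟨v, hv⟩ := hc.exists_hasEigenvector
  refine ⟨c, sub_eq_zero.1 (not_not.1 fun hne => hv.2 ?_)⟩
  refine (injective_iff_map_eq_zero _).1
    (hS.injective hS hX (hθ.sub ((isHom_id S).smul c)) hne i) v ?_
  exact sub_eq_zero.2 hv.apply_eq_smul

/-- `E` lists the `⟨X, ·⟩`-stable representations, each isomorphism class exactly once. -/
structure IsStableSystem (X : QuivRep K V A t h) {ι : Type} (E : ι → QuivRep K V A t h) :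
    Prop where
  isStableFor : ∀ j, IsStableFor X (E j)
  not_repIso : ∀ j k, j ≠ k → ¬ RepIso K (E j) (E k)
  exists_repIso : ∀ S, IsStableFor X S → ∃ j, RepIso K S (E j)

lemma IsStableSystem.exists_isHom_ne_zero {ι : Type} {E : ι → QuivRep K V A t h}
    (hE : IsStableSystem X E) (hZ : IsPerp X Z) (h0 : Z.dimVec ≠ 0) :
    ∃ (j : ι) (f : VertexMap Z (E j)), IsHom f ∧ f ≠ 0 := by
  induction hn : totalDim Z using Nat.strong_induction_on generalizing Z with
  | _ n ih =>
    by_cases hst : IsStableFor X Z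
    · obtain ⟨j, hj⟩ := hE.exists_repIso Z hst
      exact ⟨j, exists_isHom_ne_zero_of_repIso hj h0⟩
    obtain ⟨U, hU0, hUZ, hU⟩ :
        ∃ U : Sub Z, U.dimVec ≠ 0 ∧ U.dimVec ≠ Z.dimVec ∧ 0 ≤ euler X U.rep := by
      by_contra! H
      exact hst (isStableFor_of_euler_neg hZ.euler_eq_zero h0 H)
    have S := U.isShortExact
    have hU' : euler X U.rep = 0 :=
      le_antisymm (hZ.homVanishes.of_injective S.hom_left S.injective).euler_nonpos hU
    have hlt : totalDim U.quot < n := by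
      have hadd : totalDim Z = totalDim U.rep + totalDim U.quot := totalDim_eq_add U.dimVec_eq_add
      have hpos : totalDim U.rep ≠ 0 := mt totalDim_eq_zero_iff.1 hU0
      omega
    have hquot : U.quot.dimVec ≠ 0 := fun hz => hUZ (by rw [U.dimVec_eq_add, hz, add_zero])
    obtain ⟨j, f, hf, hf0⟩ := ih _ hlt (hZ.quot U hU') hquot rfl
    obtain ⟨i, x, hx⟩ := VertexMap.exists_apply_ne_zero hf0
    obtain ⟨z, rfl⟩ := S.surjective i x
    exact ⟨j, f.comp U.proj, hf.comp S.hom_right, fun hz =>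
      hx (LinearMap.congr_fun (congrFun hz i) z)⟩

end Stability

section Semistability

variable {K : Type} [Field K] {V A : Type} [Fintype V] {t h : A → V}
  {X Y M : QuivRep K V A t h} {τ : V → ℤ}

lemma weightValue_nonpos_of_cogen (hτ : IsSemistable K τ X) (hY : Cogen X Y) :
    weightValue τ Y ≤ 0 := by
  induction hn : totalDim Y using Nat.strong_induction_on generalizing Y with
  | _ n ih =>
    by_cases hYX : HomVanishes Y X
    · have hY0 : Y.dimVec = 0 := dimVec_eq_zero_iff.2 fun i y =>
        hY i y fun φ hφ => hYX.apply_eq_zero hφ i y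
      simp only [weightValue, hY0, Pi.zero_apply, Nat.cast_zero, mul_zero, Finset.sum_const_zero,
        le_refl]
    simp only [HomVanishes, not_forall] at hYX
    obtain ⟨φ, hφ, h0⟩ := hYX
    have hker : weightValue τ (kernel hφ).rep ≤ 0 :=
      ih _ (hn ▸ totalDim_kernel_lt hφ h0) (hY.of_injective (kernel hφ).isShortExact.hom_left
        (kernel hφ).isShortExact.injective) rfl
    have himage : weightValue τ (image hφ).rep ≤ 0 := hτ.2 (image hφ)
    rw [weightValue_eq_add (U := (kernel hφ).rep) (W := (image hφ).rep)
      (dimVec_eq_kernel_add_image hφ)]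
    exact add_nonpos hker himage

lemma weightValue_nonpos_of_sub_of_cogen (hτ : IsSemistable K τ X) (hY : Cogen X Y) (U : Sub Y) :
    weightValue τ U.rep ≤ 0 :=
  weightValue_nonpos_of_cogen hτ (hY.of_injective U.isShortExact.hom_left U.isShortExact.injective)

lemma weightValue_pow (τ : V → ℤ) (X : QuivRep K V A t h) (n : ℕ) :
    weightValue τ (pow X n) = n * weightValue τ X := by
  simp only [weightValue, dimVec_pow, Nat.cast_mul, Finset.mul_sum]
  exact Finset.sum_congr rfl fun i _ => mul_left_comm _ _ _

lemma weightValue_pow_eq_zero (hτ : IsSemistable K τ X) (n : ℕ) :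
    weightValue τ (pow X n) = 0 := by
  rw [weightValue_pow, show weightValue τ X = 0 from hτ.1, mul_zero]

lemma weightValue_trace_eq_zero (hτ : IsSemistable K τ X) (hM : Cogen X M) :
    weightValue τ (trace X M).rep = 0 := by
  have hadd : weightValue τ (pow X (homDim X M)) =
      weightValue τ (kernel (isHom_evaluation X M)).rep + weightValue τ (trace X M).rep :=
    weightValue_eq_add (dimVec_eq_kernel_add_image (isHom_evaluation X M))
  have hker := weightValue_nonpos_of_sub_of_cogen hτ (cogen_pow X _)
    (kernel (isHom_evaluation X M))
  have htrace := weightValue_nonpos_of_sub_of_cogen hτ hM (trace X M)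
  linarith [weightValue_pow_eq_zero hτ (homDim X M)]

lemma IsShortExact.exists_sub_weightValue_eq {U W : QuivRep K V A t h} {f : VertexMap U Y}
    {g : VertexMap Y W} (S : IsShortExact f g) (N : Sub W) :
    ∃ N' : Sub Y, ∀ τ, weightValue τ N'.rep = weightValue τ U + weightValue τ N.rep := by
  have hg : IsHom (N.proj.comp g) := N.isShortExact.hom_right.comp S.hom_right
  have S' := isShortExact_kernel hg fun i => (N.isShortExact.surjective i).comp (S.surjective i)
  refine ⟨kernel hg, fun τ => ?_⟩
  linarith [weightValue_eq_add (σ := τ) S.dimVec_eq_add,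
    weightValue_eq_add (σ := τ) S'.dimVec_eq_add,
    weightValue_eq_add (σ := τ) N.isShortExact.dimVec_eq_add]

end Semistability

section RelativeProjectives

variable {K : Type} [Field K] {V A : Type} [Fintype V] {t h : A → V}
  {X Y Z L P S : QuivRep K V A t h}

/-- `L` is a projective object of the right perpendicular category of `X` on all subrepresentations
of which the weights making `X` semistable are nonpositive. -/
structure IsRelProjective (X L : QuivRep K V A t h) : Prop where
  isPerp : IsPerp X L
  extVanishes : ∀ Z, IsPerp X Z → ExtVanishes L Z
  weightValue_sub_nonpos : ∀ τ, IsSemistable K τ X → ∀ U : Sub L, weightValue τ U.rep ≤ 0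

lemma IsRelProjective.sub (hL : IsRelProjective X L) (U : Sub L) (hU : IsPerp X U.rep) :
    IsRelProjective X U.rep where
  isPerp := hU
  extVanishes Z hZ :=
    (hL.extVanishes Z hZ).of_injective U.isShortExact.hom_left U.isShortExact.injective
  weightValue_sub_nonpos τ hτ N := by
    have hf : IsHom (U.incl.comp N.incl) :=
      U.isShortExact.hom_left.comp N.isShortExact.hom_left
    have hdim := dimVec_image_of_injective hf fun i =>
      (U.isShortExact.injective i).comp (N.isShortExact.injective i)
    exact (weightValue_congr hdim.symm).trans_le (hL.weightValue_sub_nonpos τ hτ (image hf))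

lemma IsRelProjective.weightValue_nonpos (hL : IsRelProjective X L) {τ : V → ℤ}
    (hτ : IsSemistable K τ X) : weightValue τ L ≤ 0 :=
  (weightValue_congr (dimVec_image_of_injective (isHom_id L) fun _ => Function.injective_id).symm
    ).trans_le (hL.weightValue_sub_nonpos τ hτ (image (isHom_id L)))

/- Bongartz completion: `Y` is the universal extension of `P` by copies of `X`, and `L` is its
quotient by the trace of `X`. -/
lemma exists_isRelProjective [Finite A] (hs : ∀ i, 0 < X.dimVec i) (hX : ExtVanishes X X)
    (hP : ∀ Z, ExtVanishes P Z) :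
    ∃ L, IsRelProjective X L ∧ ∀ τ, IsSemistable K τ X → weightValue τ L = weightValue τ P := by
  obtain ⟨n, Y, f, g, S, hXY⟩ := exists_universal_extension hX P
  have hY : Cogen X Y :=
    S.cogen_middle (cogen_of_sincere hs hX hP) (cogen_pow X n) (hX.pow_left n)
  have T := (trace X Y).isShortExact
  refine ⟨(trace X Y).quot, ⟨⟨fun φ hφ => ?_, ?_⟩, fun Z hZ => ?_, fun τ hτ U => ?_⟩,
    fun τ hτ => ?_⟩
  · obtain ⟨φ', hφ', hlift⟩ := T.exists_lift hX.trace hφ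
    refine funext fun i => LinearMap.ext fun x => ?_
    exact (hlift i x).symm.trans ((Submodule.Quotient.mk_eq_zero _).2 (hφ'.apply_mem_trace i x))
  · exact hXY.of_surjective T.hom_right T.surjective
  · exact T.extVanishes_right (S.extVanishes_middle (hP Z) (hZ.extVanishes.pow_left n))
      hZ.homVanishes.trace
  · obtain ⟨N, hN⟩ := T.exists_sub_weightValue_eq U
    linarith [hN τ, weightValue_trace_eq_zero hτ hY, weightValue_nonpos_of_sub_of_cogen hτ hY N]
  · linarith [weightValue_eq_add (σ := τ) T.dimVec_eq_add, weightValue_trace_eq_zero hτ hY,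
      weightValue_eq_add (σ := τ) S.dimVec_eq_add, weightValue_pow_eq_zero hτ n]

variable [Fintype A] [DecidableEq V]

lemma weightR_apply (x : V → ℤ) (i : V) :
    weightR t h x i = (∑ a, if t a = i then x (h a) else 0) - x i := by
  simp only [weightR, eulerForm, ite_mul, one_mul, zero_mul, Finset.sum_ite_eq', Finset.mem_univ,
    if_true, neg_sub]

lemma sum_weightR_mul (x y : V → ℤ) : ∑ i, weightR t h x i * y i = -eulerForm t h y x := by
  simp only [weightR_apply, sub_mul, Finset.sum_sub_distrib, Finset.sum_mul, ite_mul, zero_mul,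
    eulerForm, neg_sub]
  rw [Finset.sum_comm]
  simp only [Finset.sum_ite_eq, Finset.mem_univ, if_true, mul_comm]

lemma weightValue_weightR (Y Z : QuivRep K V A t h) :
    weightValue (weightR t h (natZ Z.dimVec)) Y = -euler Y Z :=
  sum_weightR_mul _ _

lemma IsPerp.isSemistable_weightR (hZ : IsPerp X Z) :
    IsSemistable K (weightR t h (natZ Z.dimVec)) X := by
  refine ⟨(weightValue_weightR X Z).trans (neg_eq_zero.2 hZ.euler_eq_zero), fun U => ?_⟩
  exact (weightValue_weightR U.rep Z).trans_le (neg_nonpos.2 (hZ.extVanishes.of_injective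
    U.isShortExact.hom_left U.isShortExact.injective).euler_nonneg)

lemma IsRelProjective.kernel (hL : IsRelProjective X L) (hS : IsStableFor X S) {f : VertexMap L S}
    (hf : IsHom f) (h0 : f ≠ 0) : IsRelProjective X (kernel hf).rep :=
  hL.sub _ (hL.isPerp.kernel hf (hS.surjective hL.isPerp.extVanishes hf h0) hS.euler_eq_zero)

end RelativeProjectives

section Paths

variable {V A : Type} {t h : A → V}

/-- Paths starting at the vertex `i`, as an inductive family over their end point. Unlike for
`IsPathFrom`, arrows are added at the end, which is how arrows act on the projective at `i`. -/
inductive ArrowPath (t h : A → V) (i : V) : V → Type where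
  | nil : ArrowPath t h i i
  | cons (a : A) (p : ArrowPath t h i (t a)) : ArrowPath t h i (h a)

lemma isPathFrom_append {i j k : V} {p q : List A} (hp : IsPathFrom t h i p j)
    (hq : IsPathFrom t h j q k) : IsPathFrom t h i (p ++ q) k := by
  induction p generalizing i with
  | nil => exact (show i = j from hp) ▸ hq
  | cons a p ih => exact ⟨hp.1, ih hp.2⟩

lemma exists_isPathFrom_of_transGen {i j : V}
    (H : Relation.TransGen (fun u v => ∃ a, t a = u ∧ h a = v) i j) :
    ∃ p : List A, p ≠ [] ∧ IsPathFrom t h i p j := by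
  induction H with
  | single H =>
    obtain ⟨a, ha⟩ := H
    exact ⟨[a], List.cons_ne_nil _ _, ha⟩
  | tail _ H ih =>
    obtain ⟨a, ha⟩ := H
    obtain ⟨p, -, hp⟩ := ih
    exact ⟨p ++ [a], List.append_ne_nil_of_right_ne_nil _ (List.cons_ne_nil _ _),
      isPathFrom_append hp ha⟩

lemma wellFounded_arrow [Finite V] (hQ : Acyclic t h) :
    WellFounded (fun u v => ∃ a, t a = u ∧ h a = v) := by
  have : Std.Irrefl (Relation.TransGen (fun u v => ∃ a, t a = u ∧ h a = v)) := ⟨fun i hi =>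
    let ⟨p, hne, hp⟩ := exists_isPathFrom_of_transGen hi
    hne (hQ i p hp)⟩
  have hwf : WellFounded (Relation.TransGen fun u v => ∃ a, t a = u ∧ h a = v) :=
    Finite.wellFounded_of_trans_of_irrefl _
  exact Subrelation.wf (fun H => Relation.TransGen.single H) hwf

/-- A path is either trivial or has a last arrow. -/
def ArrowPath.equivSum (i j : V) :
    ArrowPath t h i j ≃ PLift (i = j) ⊕ (Σ a : {a : A // h a = j}, ArrowPath t h i (t a.1)) where
  toFun p := match j, p with
    | _, nil => Sum.inl ⟨rfl⟩
    | _, cons a p => Sum.inr ⟨⟨a, rfl⟩, p⟩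
  invFun x := match x with
    | Sum.inl e => e.down ▸ ArrowPath.nil
    | Sum.inr y => y.1.2 ▸ ArrowPath.cons y.1.1 y.2
  left_inv p := by cases p <;> rfl
  right_inv := by rintro (⟨⟨rfl⟩⟩ | ⟨⟨a, rfl⟩, p⟩) <;> rfl

lemma ArrowPath.finite [Finite V] [Finite A] (hQ : Acyclic t h) (i j : V) :
    Finite (ArrowPath t h i j) := by
  induction j using (wellFounded_arrow hQ).induction with
  | _ j ih =>
    have (a : {a : A // h a = j}) : Finite (ArrowPath t h i (t a)) := ih _ ⟨a, rfl, a.2⟩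
    exact Finite.of_equiv _ (equivSum i j).symm

lemma ArrowPath.natCard_eq [Finite V] [DecidableEq V] [Fintype A] (hQ : Acyclic t h) (i j : V) :
    Nat.card (ArrowPath t h i j) =
      (if i = j then 1 else 0) + ∑ a, if h a = j then Nat.card (ArrowPath t h i (t a)) else 0 := by
  have := ArrowPath.finite hQ i
  rw [Nat.card_congr (equivSum i j), Nat.card_sum, Nat.card_sigma, ← Finset.sum_filter,
    Finset.sum_subtype (p := fun a => h a = j) _ (fun a => Finset.mem_filter_univ a)]
  congr 1
  split_ifs with hij
  · have : Unique (PLift (i = j)) := ⟨⟨⟨hij⟩⟩, fun _ => rfl⟩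
    exact Nat.card_unique
  · have : IsEmpty (PLift (i = j)) := ⟨fun e => hij e.down⟩
    exact Nat.card_of_isEmpty

end Paths

section Projectives

variable (K : Type) [Field K] {V A : Type} [Finite V] [Finite A] {t h : A → V}

/-- The indecomposable projective representation at a vertex, with basis the paths from it. -/
def projective (hQ : Acyclic t h) (i : V) : QuivRep K V A t h where
  sp j := ArrowPath t h i j →₀ K
  inst3 j :=
    have := ArrowPath.finite hQ i j
    inferInstance
  map a := Finsupp.lmapDomain K K (ArrowPath.cons a)

lemma dimVec_projective (hQ : Acyclic t h) (i j : V) :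
    (projective K hQ i).dimVec j = Nat.card (ArrowPath t h i j) := by
  have := ArrowPath.finite hQ i j
  have := Fintype.ofFinite (ArrowPath t h i j)
  exact (Module.finrank_finsupp_self K).trans Nat.card_eq_fintype_card.symm

variable {K}

/-- The solution `φ` of `dmap φ = ψ` on a projective representation that vanishes on the trivial
path, by recursion along paths. -/
def ArrowPath.primitive {i : V} {Y : QuivRep K V A t h}
    (ψ : ∀ a : A, (ArrowPath t h i (t a) →₀ K) →ₗ[K] Y.sp (h a)) :
    ∀ j, ArrowPath t h i j → Y.sp j
  | _, nil => 0
  | _, cons a p => Y.map a (primitive ψ _ p) + ψ a (Finsupp.single p 1)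

lemma extVanishes_projective (hQ : Acyclic t h) (i : V) (Y : QuivRep K V A t h) :
    ExtVanishes (projective K hQ i) Y := by
  intro ψ
  refine ⟨fun j => Finsupp.linearCombination K (ArrowPath.primitive ψ j), funext fun a => ?_⟩
  refine Finsupp.lhom_ext' fun p => LinearMap.ext_ring ?_
  change Finsupp.linearCombination K (ArrowPath.primitive ψ (h a))
      (Finsupp.mapDomain (ArrowPath.cons a) (Finsupp.single p 1)) -
    Y.map a (Finsupp.linearCombination K (ArrowPath.primitive ψ (t a)) (Finsupp.single p 1)) =
    ψ a (Finsupp.single p 1)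
  rw [Finsupp.mapDomain_single, Finsupp.linearCombination_single,
    Finsupp.linearCombination_single, one_smul, one_smul]
  exact add_sub_cancel_left _ _

end Projectives

section ProjectiveWeights

variable (K : Type) [Field K] {V A : Type} [Fintype V] {t h : A → V}

lemma eulerForm_projective [Fintype A] (hQ : Acyclic t h) (i : V) (y : V → ℤ) :
    eulerForm t h (natZ (projective K hQ i).dimVec) y = y i := by
  classical
  have hcard (j : V) : natZ (projective K hQ i).dimVec j = (if i = j then 1 else 0) +
      ∑ a, if h a = j then natZ (projective K hQ i).dimVec (t a) else 0 := by
    simp only [natZ, dimVec_projective]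
    exact_mod_cast ArrowPath.natCard_eq hQ i j
  have hsum : ∑ j, natZ (projective K hQ i).dimVec j * y j =
      y i + ∑ a, natZ (projective K hQ i).dimVec (t a) * y (h a) := by
    rw [Finset.sum_congr rfl fun j _ => congrArg (· * y j) (hcard j)]
    simp only [add_mul, Finset.sum_add_distrib, ite_mul, one_mul, zero_mul, Finset.sum_ite_eq,
      Finset.mem_univ, if_true, Finset.sum_mul]
    rw [Finset.sum_comm]
    simp only [Finset.sum_ite_eq, Finset.mem_univ, if_true]
  rw [eulerForm, hsum, add_sub_cancel_right]

lemma eq_zero_of_weightValue_projective [Finite A] (hQ : Acyclic t h) {τ : V → ℤ}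
    (H : ∀ i, weightValue τ (projective K hQ i) = 0) : τ = 0 := by
  classical
  have := Fintype.ofFinite A
  let M : Matrix V V ℤ := Matrix.of fun i => natZ (projective K hQ i).dimVec
  let N : Matrix V V ℤ := Matrix.of fun j k => -weightR t h (Pi.single k 1) j
  have hMN : M * N = 1 := by
    ext i k
    rw [Matrix.mul_apply, Matrix.one_apply]
    simp only [M, N, Matrix.of_apply, mul_neg, Finset.sum_neg_distrib]
    rw [Finset.sum_congr rfl fun j _ => mul_comm _ _]
    rw [sum_weightR_mul, neg_neg, eulerForm_projective, Pi.single_apply]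
  have hMτ : M.mulVec τ = 0 := funext fun i =>
    (Finset.sum_congr rfl fun j _ => mul_comm _ _).trans (H i)
  rw [← Matrix.one_mulVec τ, ← mul_eq_one_comm.1 hMN, ← Matrix.mulVec_mulVec, hMτ,
    Matrix.mulVec_zero]

end ProjectiveWeights

section MinimalCovers

variable {K : Type} [Field K] {V A : Type} [Fintype V] [DecidableEq V] [Fintype A] {t h : A → V}
  {X P S R : QuivRep K V A t h}

/-- A nonzero morphism to `S` from a relatively projective representation of minimal dimension. -/
structure IsMinimalCover (X : QuivRep K V A t h) (f : VertexMap P S) : Prop where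
  isRelProjective : IsRelProjective X P
  isHom : IsHom f
  ne_zero : f ≠ 0
  totalDim_le : ∀ (L : QuivRep K V A t h) (g : VertexMap L S),
    IsRelProjective X L → IsHom g → g ≠ 0 → totalDim P ≤ totalDim L

lemma exists_isRelProjective_isHom_ne_zero (hQ : Acyclic t h) (hs : ∀ i, 0 < X.dimVec i)
    (hX : ExtVanishes X X) (hS : IsStableFor X S) :
    ∃ (L : QuivRep K V A t h) (f : VertexMap L S), IsRelProjective X L ∧ IsHom f ∧ f ≠ 0 := by
  obtain ⟨i, hi⟩ := Function.ne_iff.1 hS.dimVec_ne_zero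
  obtain ⟨L, hL, hweight⟩ := exists_isRelProjective hs hX (extVanishes_projective (K := K) hQ i)
  have hSX := hS.isPerp hX
  have heuler : euler L S = euler (projective K hQ i) S := by
    have H := hweight _ hSX.isSemistable_weightR
    rwa [weightValue_weightR, weightValue_weightR, neg_inj] at H
  have hne : ¬ HomVanishes L S := fun H => hi <| by
    rw [euler_eq_zero H (hL.extVanishes S hSX), euler, eulerForm_projective] at heuler
    exact Int.natCast_eq_zero.1 heuler.symm
  simp only [HomVanishes, not_forall] at hne
  obtain ⟨f, hf, h0⟩ := hne
  exact ⟨L, f, hL, hf, h0⟩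

lemma exists_isMinimalCover (hQ : Acyclic t h) (hs : ∀ i, 0 < X.dimVec i)
    (hX : ExtVanishes X X) (hS : IsStableFor X S) :
    ∃ (P : QuivRep K V A t h) (f : VertexMap P S), IsMinimalCover X f := by
  obtain ⟨P, ⟨f, hP, hf, h0⟩, hmin⟩ := (measure totalDim).wf.has_min
    {L : QuivRep K V A t h | ∃ f : VertexMap L S, IsRelProjective X L ∧ IsHom f ∧ f ≠ 0}
    (exists_isRelProjective_isHom_ne_zero hQ hs hX hS)
  exact ⟨P, f, hP, hf, h0, fun L g hL hg hg0 => not_lt.1 (hmin L ⟨g, hL, hg, hg0⟩)⟩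

lemma IsMinimalCover.exists_factor {f : VertexMap P S} (H : IsMinimalCover X f)
    (hR : IsStableFor X R) {g : VertexMap P R} (hg : IsHom g) (hg0 : g ≠ 0) :
    ∃ θ : VertexMap R S, IsHom θ ∧ ∀ i x, θ i (g i x) = f i x := by
  have hsurj := hR.surjective H.isRelProjective.isPerp.extVanishes hg hg0
  refine (isShortExact_kernel hg hsurj).exists_hom_descend H.isHom fun i u => ?_
  by_contra hne
  refine (totalDim_kernel_lt hg hg0).not_ge (H.totalDim_le _ (f.comp (kernel hg).incl)
    (H.isRelProjective.kernel hR hg hg0) (H.isHom.comp (kernel hg).isShortExact.hom_left) ?_)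
  exact fun hz => hne (LinearMap.congr_fun (congrFun hz i) u)

lemma IsMinimalCover.homDim_eq_one [IsAlgClosed K] {f : VertexMap P S} (H : IsMinimalCover X f)
    (hX : ExtVanishes X X) (hS : IsStableFor X S) : homDim P S = 1 := by
  let f' : homS P S := ⟨f, isHom_iff_mem_homS.1 H.isHom⟩
  have hf' : f' ≠ 0 := fun hz => H.ne_zero (congrArg Subtype.val hz)
  refine (finrank_eq_one_iff_of_nonzero' f' hf').2 fun g => ?_
  by_cases hg0 : g = 0
  · exact ⟨0, by rw [zero_smul, hg0]⟩
  obtain ⟨θ, hθ, hθf⟩ := H.exists_factor hS (isHom_iff_mem_homS.2 g.2) fun hz =>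
    hg0 (Subtype.ext hz)
  obtain ⟨c, rfl⟩ := hS.exists_eq_smul_id hX hθ
  have hfg : f' = c • g := Subtype.ext (funext fun i => LinearMap.ext fun x => (hθf i x).symm)
  have hc : c ≠ 0 := by
    rintro rfl
    exact hf' (by rw [hfg, zero_smul])
  exact ⟨c⁻¹, by rw [hfg, inv_smul_smul₀ hc]⟩

lemma IsMinimalCover.homVanishes {f : VertexMap P S} (H : IsMinimalCover X f)
    (hX : ExtVanishes X X) (hS : IsStableFor X S) (hR : IsStableFor X R) (hRS : ¬ RepIso K R S) :
    HomVanishes P R := by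
  refine fun g hg => not_not.1 fun hg0 => ?_
  obtain ⟨θ, hθ, hθf⟩ := H.exists_factor hR hg hg0
  refine hRS (hR.repIso hS hX hθ ?_)
  rintro rfl
  exact H.ne_zero (funext fun i => LinearMap.ext fun x => (hθf i x).symm)

end MinimalCovers

section StableSystems

variable {K : Type} [Field K] {V A : Type} [Fintype V] [DecidableEq V] [Fintype A] {t h : A → V}
  {X L : QuivRep K V A t h} {ι : Type} {E P : ι → QuivRep K V A t h}
  {f : ∀ j, VertexMap (P j) (E j)}

lemma IsStableSystem.euler_eq_ite [IsAlgClosed K] [DecidableEq ι] (hE : IsStableSystem X E)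
    (hX : ExtVanishes X X) (hf : ∀ j, IsMinimalCover X (f j)) (j k : ι) :
    euler (P j) (E k) = if k = j then 1 else 0 := by
  have hext : ExtVanishes (P j) (E k) :=
    (hf j).isRelProjective.extVanishes _ ((hE.isStableFor k).isPerp hX)
  split_ifs with hkj
  · subst hkj
    rw [hext.euler_eq, (hf k).homDim_eq_one hX (hE.isStableFor k), Nat.cast_one]
  · exact euler_eq_zero ((hf j).homVanishes hX (hE.isStableFor j) (hE.isStableFor k)
      (hE.not_repIso k j hkj)) hext

lemma IsStableSystem.weightValue_eq_zero (hE : IsStableSystem X E)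
    (hf : ∀ j, IsMinimalCover X (f j)) {σ : V → ℤ} (hσ : ∀ j, weightValue σ (P j) = 0)
    (hL : IsRelProjective X L) : weightValue σ L = 0 := by
  induction hn : totalDim L using Nat.strong_induction_on generalizing L with
  | _ n ih =>
    by_cases h0 : L.dimVec = 0
    · simp only [weightValue, h0, Pi.zero_apply, Nat.cast_zero, mul_zero, Finset.sum_const_zero]
    obtain ⟨j, g, hg, hg0⟩ := hE.exists_isHom_ne_zero hL.isPerp h0
    have hS := hE.isStableFor j
    have hadd {M : QuivRep K V A t h} (hM : IsRelProjective X M) {g : VertexMap M (E j)}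
        (hg : IsHom g) (hg0 : g ≠ 0) (hle : totalDim M ≤ n) :
        weightValue σ M = weightValue σ (E j) := by
      have hlt := (totalDim_kernel_lt hg hg0).trans_le hle
      have hsurj := hS.surjective hM.isPerp.extVanishes hg hg0
      rw [weightValue_eq_add (isShortExact_kernel hg hsurj).dimVec_eq_add,
        ih _ hlt (hM.kernel hS hg hg0) rfl, zero_add]
    rw [hadd hL hg hg0 hn.le, ← hadd (hf j).isRelProjective (hf j).isHom (hf j).ne_zero
      (hn ▸ (hf j).totalDim_le L g hL hg hg0), hσ j]

/- With the minimal covers `P j` dual to the `E j` for the Euler form, `τ + ∑ τ(P k) ⟨·, E k⟩` is a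
weight vanishing on them, hence on all relatively projective representations. -/
lemma IsStableSystem.exists_eq_sum_weightR [IsAlgClosed K] [Fintype ι] (hE : IsStableSystem X E)
    (hQ : Acyclic t h) (hs : ∀ i, 0 < X.dimVec i) (hX : ExtVanishes X X) {τ : V → ℤ}
    (hτ : IsSemistable K τ X) :
    ∃ n : ι → ℕ, τ = ∑ j, (n j : ℤ) • weightR t h (natZ (E j).dimVec) := by
  classical
  choose P f hf using fun j => exists_isMinimalCover hQ hs hX (hE.isStableFor j)
  choose n hn using fun j => Int.eq_ofNat_of_zero_le
    (neg_nonneg.2 ((hf j).isRelProjective.weightValue_nonpos hτ))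
  refine ⟨n, ?_⟩
  simp only [← hn]
  have hvalue (M : QuivRep K V A t h) := weightValue_add_sum_smul Finset.univ τ
    (fun j => weightValue τ (P j)) (fun j => weightR t h (natZ (E j).dimVec)) M
  have hcover (j : ι) : weightValue (τ + ∑ k, weightValue τ (P k) •
      weightR t h (natZ (E k).dimVec)) (P j) = 0 := by
    simp only [hvalue, weightValue_weightR, hE.euler_eq_ite hX hf, mul_neg, mul_ite,
      mul_one, mul_zero, Finset.sum_neg_distrib, Finset.sum_ite_eq', Finset.mem_univ, if_true,
      add_neg_cancel]
  have hzero := eq_zero_of_weightValue_projective K hQ (τ := τ + ∑ k, weightValue τ (P k) •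
      weightR t h (natZ (E k).dimVec)) fun i => by
    obtain ⟨L, hL, hLP⟩ := exists_isRelProjective hs hX (extVanishes_projective (K := K) hQ i)
    rw [← hE.weightValue_eq_zero hf hcover hL, hvalue, hvalue, hLP τ hτ]
    simp only [hLP _ ((hE.isStableFor _).isPerp hX).isSemistable_weightR]
  simp only [neg_smul, Finset.sum_neg_distrib]
  exact eq_neg_of_add_eq_zero_left hzero

lemma IsStableSystem.linearIndependent_weightR [IsAlgClosed K] (hE : IsStableSystem X E)
    (hQ : Acyclic t h) (hs : ∀ i, 0 < X.dimVec i) (hX : ExtVanishes X X) :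
    LinearIndependent ℤ fun j => weightR t h (natZ (E j).dimVec) := by
  classical
  choose P f hf using fun j => exists_isMinimalCover hQ hs hX (hE.isStableFor j)
  refine linearIndependent_iff'.2 fun s c hc k hk => ?_
  have hvalue := weightValue_add_sum_smul s 0 c
    (fun j => weightR t h (natZ (E j).dimVec)) (P k)
  have hzero : weightValue 0 (P k) = 0 := by
    simp only [weightValue, Pi.zero_apply, zero_mul, Finset.sum_const_zero]
  simpa only [hc, add_zero, hzero, weightValue_weightR, hE.euler_eq_ite hX hf, zero_add, mul_neg,
    mul_ite, mul_one, mul_zero, Finset.sum_neg_distrib, Finset.sum_ite_eq', hk,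
    if_true, zero_eq_neg] using hvalue

end StableSystems

section Points

variable {K : Type} [Field K] {V A : Type} {t h : A → V} {X Y : QuivRep K V A t h}

lemma IsRigid.extVanishes [Finite A] (hX : X.IsRigid) : ExtVanishes X X := by
  have := Fintype.ofFinite A
  have hquot := Module.finrank_zero_iff.1 (show extDim X X = 0 from hX)
  exact LinearMap.range_eq_top.1 (Submodule.Quotient.subsingleton_iff.1 hquot)

lemma ExtVanishes.of_repIso (hXY : RepIso K X Y) (hX : ExtVanishes X X) : ExtVanishes Y Y := by
  obtain ⟨e, he⟩ := hXY
  have hinv : IsHom (fun i => ((e i).symm : Y.sp i →ₗ[K] X.sp i)) := fun a x =>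
    (LinearEquiv.symm_apply_eq _).2 (by
      rw [LinearEquiv.coe_coe, he, LinearEquiv.apply_symm_apply])
  have hext : ExtVanishes X Y :=
    hX.of_surjective (g := fun i => (e i).toLinearMap) he fun i => (e i).surjective
  exact hext.of_injective hinv fun i => (e i).symm.injective

lemma exists_repIso_toRep (X : QuivRep K V A t h) :
    ∃ W : RepSpace K t h X.dimVec, RepIso K X (toRep K t h W) := by
  let b i := Module.finBasis K (X.sp i)
  exact ⟨fun a => LinearMap.toMatrix (b (t a)) (b (h a)) (X.map a), fun i => (b i).equivFun,
    fun a x => (LinearMap.toMatrix_mulVec_repr (b (t a)) (b (h a)) (X.map a) x).symm⟩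

end Points

section MatrixFamilies

variable {R : Type} [CommRing R] {I : Type} {m n : I → ℕ}

/-- The vector of all entries of a family of matrices, in the index conventions of
`schofieldMatrix`. -/
def flatten :
    (∀ i, Matrix (Fin (m i)) (Fin (n i)) R) ≃ₗ[R] ((i : I) × (Fin (m i) × Fin (n i)) → R) where
  toFun φ c := φ c.1 c.2.1 c.2.2
  invFun v i p q := v ⟨i, (p, q)⟩
  map_add' _ _ := rfl
  map_smul' _ _ := rfl

lemma flatten_apply (φ : ∀ i, Matrix (Fin (m i)) (Fin (n i)) R)
    (c : (i : I) × (Fin (m i) × Fin (n i))) : flatten φ c = φ c.1 c.2.1 c.2.2 := rfl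

/-- The vector of all matrix entries of a family of linear maps between coordinate spaces. -/
def flattenMaps (R : Type) [CommRing R] (m n : I → ℕ) :
    (∀ i, (Fin (n i) → R) →ₗ[R] (Fin (m i) → R)) ≃ₗ[R]
      ((i : I) × (Fin (m i) × Fin (n i)) → R) :=
  (LinearEquiv.piCongrRight fun _ => LinearMap.toMatrix').trans flatten

end MatrixFamilies

section SchofieldMatrix

variable {K : Type} [Field K] {V A : Type} {t h : A → V} {α w : V → ℕ}

/-- The map `dmap` in matrix coordinates. -/
def matrixDmap (M : RepSpace K t h α) (N : RepSpace K t h w)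
    (φ : ∀ i, Matrix (Fin (w i)) (Fin (α i)) K) (a : A) :
    Matrix (Fin (w (h a))) (Fin (α (t a))) K :=
  φ (h a) * M a - N a * φ (t a)

@[simp]
lemma entryN_val {m n : ℕ} (M : Matrix (Fin m) (Fin n) K) (i : Fin m) (j : Fin n) :
    entryN K M i j = M i j := by
  simp only [entryN, i.isLt, j.isLt, dite_true]

lemma card_eq_card_of_eulerForm_eq_zero [Fintype V] [Fintype A]
    (he : eulerForm t h (natZ α) (natZ w) = 0) :
    Fintype.card ((i : V) × (Fin (w i) × Fin (α i))) =
      Fintype.card ((a : A) × (Fin (w (h a)) × Fin (α (t a)))) := by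
  simp only [Fintype.card_sigma, Fintype.card_prod, Fintype.card_fin]
  zify
  simpa only [mul_comm (w _ : ℤ)] using
    (sub_eq_zero.1 he : ∑ i, (α i : ℤ) * w i = ∑ a, (α (t a) : ℤ) * w (h a))

variable [Fintype V] [DecidableEq V]

lemma sum_ite_entryN_left {i₀ : V} {k : ℕ} (B : Matrix (Fin (α i₀)) (Fin k) K)
    (φ : ∀ i, Matrix (Fin (w i)) (Fin (α i)) K) (p : Fin (w i₀)) (q : Fin k) :
    ∑ c : (i : V) × (Fin (w i) × Fin (α i)),
      (if c.1 = i₀ ∧ (c.2.1 : ℕ) = p then entryN K B c.2.2 q else 0) * flatten φ c =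
      (φ i₀ * B) p q := by
  rw [Fintype.sum_sigma, Fintype.sum_eq_single i₀ fun i hi => by simp [hi],
    Fintype.sum_prod_type, Fintype.sum_eq_single p fun p' hp => by simp [Fin.val_inj, hp],
    Matrix.mul_apply]
  simp only [and_self, if_true, entryN_val, flatten_apply, mul_comm]

lemma sum_ite_entryN_right {i₀ : V} {k : ℕ} (B : Matrix (Fin k) (Fin (w i₀)) K)
    (φ : ∀ i, Matrix (Fin (w i)) (Fin (α i)) K) (p : Fin k) (q : Fin (α i₀)) :
    ∑ c : (i : V) × (Fin (w i) × Fin (α i)),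
      (if c.1 = i₀ ∧ (c.2.2 : ℕ) = q then entryN K B p c.2.1 else 0) * flatten φ c =
      (B * φ i₀) p q := by
  rw [Fintype.sum_sigma, Fintype.sum_eq_single i₀ fun i hi => by simp [hi],
    Fintype.sum_prod_type_right, Fintype.sum_eq_single q fun q' hq => by simp [Fin.val_inj, hq],
    Matrix.mul_apply]
  simp only [and_self, if_true, entryN_val, flatten_apply]

lemma schofieldMatrix_mulVec_flatten (M : RepSpace K t h α) (N : RepSpace K t h w)
    (φ : ∀ i, Matrix (Fin (w i)) (Fin (α i)) K) :
    (schofieldMatrix K t h M N).mulVec (flatten φ) = flatten (matrixDmap M N φ) := by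
  funext ⟨a, p, q⟩
  simp only [Matrix.mulVec, dotProduct, schofieldMatrix, sub_mul, Finset.sum_sub_distrib,
    sum_ite_entryN_left, sum_ite_entryN_right]
  rfl

lemma schofieldMatrix_mulVec_flattenMaps (M : RepSpace K t h α) (N : RepSpace K t h w)
    (φ : VertexMap (toRep K t h M) (toRep K t h N)) :
    (schofieldMatrix K t h M N).mulVec (flattenMaps K w α φ) =
      flattenMaps K (fun a => w (h a)) (fun a => α (t a)) (dmap _ _ φ) := by
  have hcoord (a : A) (ψ₁ : (Fin (α (h a)) → K) →ₗ[K] (Fin (w (h a)) → K))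
      (ψ₂ : (Fin (α (t a)) → K) →ₗ[K] (Fin (w (t a)) → K)) :
      LinearMap.toMatrix' ψ₁ * M a - N a * LinearMap.toMatrix' ψ₂ =
        LinearMap.toMatrix' (ψ₁ ∘ₗ Matrix.mulVecLin (M a) - Matrix.mulVecLin (N a) ∘ₗ ψ₂) := by
    rw [map_sub, LinearMap.toMatrix'_comp, LinearMap.toMatrix'_comp, ← Matrix.toLin'_apply',
      ← Matrix.toLin'_apply', LinearMap.toMatrix'_toLin', LinearMap.toMatrix'_toLin']
  have hdmap : matrixDmap M N (fun i => LinearMap.toMatrix' (φ i)) =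
      fun a => LinearMap.toMatrix' (dmap (toRep K t h M) (toRep K t h N) φ a) :=
    funext fun a => hcoord a _ _
  exact (schofieldMatrix_mulVec_flatten M N _).trans (congrArg flatten hdmap)

lemma HomVanishes.injective_mulVec {M : RepSpace K t h α} {N : RepSpace K t h w}
    (H : HomVanishes (toRep K t h M) (toRep K t h N)) :
    Function.Injective (schofieldMatrix K t h M N).mulVec := by
  refine .of_comp_right (g := flattenMaps K w α) (fun φ ψ hφψ => ?_) (flattenMaps K w α).surjective
  exact homVanishes_iff_injective_dmap.1 H ((flattenMaps K _ _).injective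
    ((schofieldMatrix_mulVec_flattenMaps M N φ).symm.trans
      (hφψ.trans (schofieldMatrix_mulVec_flattenMaps M N ψ))))

lemma ExtVanishes.surjective_mulVec {M : RepSpace K t h α} {N : RepSpace K t h w}
    (H : ExtVanishes (toRep K t h M) (toRep K t h N)) :
    Function.Surjective (schofieldMatrix K t h M N).mulVec := fun v => by
  obtain ⟨φ, hφ⟩ := H ((flattenMaps K _ _).symm v)
  exact ⟨flattenMaps K w α φ, (schofieldMatrix_mulVec_flattenMaps M N φ).trans
    ((congrArg _ hφ).trans ((flattenMaps K _ _).apply_symm_apply v))⟩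

variable [Fintype A]

lemma schofieldSI_ne_zero {M : RepSpace K t h α} {N : RepSpace K t h w}
    (he : eulerForm t h (natZ α) (natZ w) = 0)
    (H : HomVanishes (toRep K t h M) (toRep K t h N)) : schofieldSI K t h N M ≠ 0 := by
  rw [schofieldSI, dif_pos (card_eq_card_of_eulerForm_eq_zero he)]
  refine ((Matrix.isUnit_iff_isUnit_det _).1 (Matrix.mulVec_injective_iff_isUnit.1 ?_)).ne_zero
  exact ((Fintype.equivOfCardEq _).surjective.injective_comp_right).comp H.injective_mulVec

end SchofieldMatrix

section Density

open Polynomial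

variable {K : Type} [Field K]

lemma exists_polynomial_mulVec_eq_zero {m n : Type} [Finite m] [Fintype n] (M : Matrix m n K[X])
    (hM : Function.Surjective (M.map (eval 0)).mulVec) {v : n → K}
    (hv : (M.map (eval 0)).mulVec v = 0) :
    ∃ u : n → K[X], M.mulVec u = 0 ∧ ∀ i, (u i).eval 0 = v i := by
  classical
  have := Fintype.ofFinite m
  obtain ⟨S, hS⟩ := Matrix.mulVec_surjective_iff_exists_right_inverse.1 hM
  have hmap {l o : Type} [Fintype o] (N : Matrix l o K[X]) (x : o → K[X]) (i : l) :
      (N.mulVec x i).eval 0 = (N.map (eval 0)).mulVec (fun j => (x j).eval 0) i :=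
    RingHom.map_mulVec (evalRingHom (0 : K)) N x i
  let B := M * S.map C
  have hB : B.map (eval 0) = 1 := by
    rw [← hS, ← coe_evalRingHom, Matrix.map_mul, Matrix.map_map]
    congr 1
    ext
    exact eval_C
  have hvC : (fun i => (M.mulVec (C ∘ v) i).eval 0) = 0 := by
    simpa only [hmap, Function.comp_apply, eval_C] using hv
  refine ⟨B.det • (C ∘ v) - (S.map C).mulVec (B.adjugate.mulVec (M.mulVec (C ∘ v))), ?_,
    fun i => ?_⟩
  · rw [Matrix.mulVec_sub, Matrix.mulVec_smul, Matrix.mulVec_mulVec, Matrix.mulVec_mulVec,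
      Matrix.mul_adjugate, Matrix.smul_mulVec, Matrix.one_mulVec, sub_self]
  · have hdet : B.det.eval 0 = 1 := by
      rw [← coe_evalRingHom, RingHom.map_det, RingHom.mapMatrix_apply, coe_evalRingHom, hB,
        Matrix.det_one]
    have hcorr : (fun j => (B.adjugate.mulVec (M.mulVec (C ∘ v)) j).eval 0) = 0 := by
      funext j
      rw [hmap, hvC, Matrix.mulVec_zero]
    rw [Pi.sub_apply, eval_sub, hmap _ (B.adjugate.mulVec _), hcorr, Matrix.mulVec_zero]
    simp only [Pi.smul_apply, smul_eq_mul, Function.comp_apply, eval_mul, eval_C, hdet, one_mul,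
      Pi.zero_apply, sub_zero]

variable {V A : Type} {t h : A → V} {α : V → ℕ}

lemma glAct_eq_iff {g : ∀ i, Matrix.GeneralLinearGroup (Fin (α i)) K} {M N : RepSpace K t h α} :
    glAct K t h g M = N ↔ ∀ a, (g (h a)).1 * M a = N a * (g (t a)).1 := by
  rw [funext_iff]
  refine forall_congr' fun a => ⟨fun H => ?_, fun H => ?_⟩
  · rw [← H, glAct, Matrix.mul_assoc _ _ (g (t a)).1, ← Units.val_mul, inv_mul_cancel,
      Units.val_one, Matrix.mul_one]
  · rw [glAct, H, Matrix.mul_assoc, ← Units.val_mul, mul_inv_cancel, Units.val_one, Matrix.mul_one]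

lemma _root_.IsPolyFun.exists_polynomial_line {f : RepSpace K t h α → K} (hf : IsPolyFun K t h f)
    (M N : RepSpace K t h α) : ∃ p : K[X], ∀ s, p.eval s = f (M + s • N) := by
  obtain ⟨P, hP⟩ := hf
  refine ⟨P.eval₂ (algebraMap K K[X]) fun x => C (M x.1 x.2.1 x.2.2) + X * C (N x.1 x.2.1 x.2.2),
    fun s => ?_⟩
  have hconst : (evalRingHom s).comp (algebraMap K K[X]) = .id K := RingHom.ext fun _ => eval_C
  rw [hP, MvPolynomial.polynomial_eval_eval₂, hconst, MvPolynomial.eval₂_id]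
  simp only [eval_add, eval_mul, eval_C, eval_X]
  rfl

lemma exists_glAct_eq {φ : ∀ i, Matrix (Fin (α i)) (Fin (α i)) K} (hφ : ∀ i, (φ i).det ≠ 0)
    {M N : RepSpace K t h α} (H : matrixDmap M N φ = 0) : ∃ g, glAct K t h g M = N :=
  ⟨fun i => .mkOfDetNeZero (φ i) (hφ i), glAct_eq_iff.2 fun a => sub_eq_zero.1 (congrFun H a)⟩

variable {w : V → ℕ}

lemma entryN_add_smul {m n : ℕ} (M N : Matrix (Fin m) (Fin n) K) (s : K) (i j : ℕ) :
    entryN K (M + s • N) i j = entryN K M i j + s * entryN K N i j := by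
  unfold entryN
  split_ifs <;> simp

lemma schofieldMatrix_add_smul [DecidableEq V] (M : RepSpace K t h α) (L N : RepSpace K t h w)
    (s : K) :
    schofieldMatrix K t h M (L + s • N) =
      schofieldMatrix K t h M L + s • schofieldMatrix K t h 0 N := by
  ext r c
  simp only [schofieldMatrix, Matrix.add_apply, Matrix.smul_apply, smul_eq_mul, Pi.add_apply,
    Pi.smul_apply, entryN_add_smul]
  have hzero : entryN K ((0 : RepSpace K t h α) r.1) c.2.2 r.2.2 = 0 := by
    unfold entryN
    split_ifs <;> rfl
  rw [hzero]
  split_ifs <;> ring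

lemma exists_polynomial_matrixDmap_eq_zero [Finite V] [Finite A] {M : RepSpace K t h α}
    (hM : ExtVanishes (toRep K t h M) (toRep K t h M)) (N : RepSpace K t h α) :
    ∃ Φ : ∀ i, Matrix (Fin (α i)) (Fin (α i)) K[X], (∀ i, (Φ i).map (eval 0) = 1) ∧
      ∀ s, matrixDmap M (M + s • N) (fun i => (Φ i).map (eval s)) = 0 := by
  classical
  have := Fintype.ofFinite V
  let S := (schofieldMatrix K t h M M).map C + (X : K[X]) • (schofieldMatrix K t h 0 N).map C
  have hS (s : K) : S.map (eval s) = schofieldMatrix K t h M (M + s • N) := by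
    rw [schofieldMatrix_add_smul]
    ext
    simp only [S, Matrix.map_apply, Matrix.add_apply, Matrix.smul_apply, smul_eq_mul, eval_add,
      eval_mul, eval_X, eval_C]
  have hS0 : S.map (eval 0) = schofieldMatrix K t h M M := by rw [hS, zero_smul, add_zero]
  have hone : matrixDmap M M (fun _ => 1) = 0 := by
    funext a
    rw [matrixDmap, Matrix.one_mul, Matrix.mul_one, sub_self, Pi.zero_apply]
  obtain ⟨u, hu, hu0⟩ := exists_polynomial_mulVec_eq_zero S (hS0 ▸ hM.surjective_mulVec)
    (v := flatten fun _ => 1) (by rw [hS0, schofieldMatrix_mulVec_flatten, hone, map_zero])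
  refine ⟨flatten.symm u, fun i => Matrix.ext fun p q => hu0 ⟨i, (p, q)⟩, fun s =>
    flatten.injective ?_⟩
  rw [← schofieldMatrix_mulVec_flatten, ← hS, map_zero]
  funext r
  refine (RingHom.map_mulVec (evalRingHom s) S u r).symm.trans ?_
  rw [hu, Pi.zero_apply, map_zero, Pi.zero_apply]

theorem _root_.IsPolyFun.eq_zero_of_glAct_eq_zero [Infinite K] [Finite V] [Finite A]
    {f : RepSpace K t h α → K} (hf : IsPolyFun K t h f) {M : RepSpace K t h α}
    (hM : ExtVanishes (toRep K t h M) (toRep K t h M)) (H : ∀ g, f (glAct K t h g M) = 0) :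
    f = 0 := by
  have := Fintype.ofFinite V
  funext W
  obtain ⟨Φ, hΦ0, hΦ⟩ := exists_polynomial_matrixDmap_eq_zero hM (W - M)
  obtain ⟨p, hp⟩ := hf.exists_polynomial_line M (W - M)
  have hdet (i : V) (s : K) : (Φ i).det.eval s = ((Φ i).map (eval s)).det :=
    (evalRingHom s).map_det (Φ i)
  have hprod : p * ∏ i, (Φ i).det = 0 := Polynomial.funext fun s => by
    rw [eval_mul, eval_zero, hp, eval_prod, mul_eq_zero, Finset.prod_eq_zero_iff,
      or_iff_not_imp_right]
    intro hne
    push Not at hne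
    obtain ⟨g, hg⟩ := exists_glAct_eq (fun i => hdet i s ▸ hne i (Finset.mem_univ i)) (hΦ s)
    exact hg ▸ H g
  have hone (i : V) : (Φ i).det.eval 0 = 1 := by rw [hdet, hΦ0, Matrix.det_one]
  have hne : ∏ i, (Φ i).det ≠ 0 := fun hzero => one_ne_zero (α := K) (by
    simpa only [eval_prod, hone, Finset.prod_const_one, eval_zero] using congrArg (eval 0) hzero)
  have hW := hp 1
  rwa [(mul_eq_zero.1 hprod).resolve_right hne, eval_zero, one_smul, add_sub_cancel, eq_comm] at hW

end Density

end QuivRep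

section PolynomialFunctions

variable {K : Type} [Field K] {V A : Type} {t h : A → V} {α : V → ℕ}

lemma aeval_eq_eval_apply {σ T : Type} (c : σ → T → K) (p : MvPolynomial σ K) (x : T) :
    MvPolynomial.aeval c p x = MvPolynomial.eval (fun j => c j x) p :=
  (MvPolynomial.comp_aeval_apply c (Pi.evalAlgHom K (fun _ => K) x) p).trans
    (congrFun (congrArg DFunLike.coe (MvPolynomial.coe_aeval_eq_eval fun j => c j x)) p)

variable (K t h α) in
/-- The algebra of polynomial functions on `rep(Q,α)`. -/
def polyFunAlgebra : Subalgebra K (RepSpace K t h α → K) :=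
  (MvPolynomial.aeval (R := K) fun (x : (a : A) × (Fin (α (h a)) × Fin (α (t a))))
    (W : RepSpace K t h α) => W x.1 x.2.1 x.2.2).range

lemma mem_polyFunAlgebra_iff {f : RepSpace K t h α → K} :
    f ∈ polyFunAlgebra K t h α ↔ IsPolyFun K t h f := by
  refine exists_congr fun P => ⟨fun H W => ?_, fun H => funext fun W => ?_⟩
  · rw [← H]
    exact aeval_eq_eval_apply _ P W
  · rw [H]
    exact aeval_eq_eval_apply _ P W

lemma coord_mem_polyFunAlgebra (a : A) (p : Fin (α (h a))) (q : Fin (α (t a))) :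
    (fun W : RepSpace K t h α => W a p q) ∈ polyFunAlgebra K t h α :=
  ⟨.X ⟨a, (p, q)⟩, MvPolynomial.aeval_X _ _⟩

lemma det_mem_subalgebra {T n : Type} [Fintype n] [DecidableEq n]
    {S : Subalgebra K (T → K)} {M : T → Matrix n n K} (hM : ∀ i j, (fun x => M x i j) ∈ S) :
    (fun x => (M x).det) ∈ S := by
  have hdet : (fun x => (M x).det) =
      ∑ π : Equiv.Perm n, Equiv.Perm.sign π • ∏ i, fun x => M x (π i) i := by
    funext x
    simp only [Matrix.det_apply, Finset.sum_apply, Pi.smul_apply, Finset.prod_apply]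
  rw [hdet]
  exact sum_mem fun π _ => zsmul_mem (prod_mem fun i _ => hM _ _) _

lemma entryN_mem_polyFunAlgebra (a : A) (r s : ℕ) :
    (fun W : RepSpace K t h α => entryN K (W a) r s) ∈ polyFunAlgebra K t h α := by
  unfold entryN
  split_ifs
  · exact coord_mem_polyFunAlgebra _ _ _
  · exact zero_mem _
  · exact zero_mem _

lemma isPolyFun_schofieldSI [Fintype V] [DecidableEq V] [Fintype A] {w : V → ℕ}
    (E : RepSpace K t h w) : IsPolyFun K t h (schofieldSI K t h E : RepSpace K t h α → K) := by
  rw [← mem_polyFunAlgebra_iff]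
  unfold schofieldSI
  split_ifs
  · refine det_mem_subalgebra fun r c => sub_mem ?_ ?_ <;> split_ifs
    · exact entryN_mem_polyFunAlgebra _ _ _
    · exact zero_mem _
    · exact algebraMap_mem (polyFunAlgebra K t h α) (entryN K _ _ _)
    · exact zero_mem _
  · exact zero_mem _

end PolynomialFunctions

section Characters

variable {K : Type} [Field K] {ι : Type}

section Fintype

variable [Fintype ι]

/-- The character `μ ↦ ∏ i, μ i ^ σ i` of the torus `(Kˣ)^ι`. -/
def torusChar (σ : ι → ℤ) : (ι → Kˣ) →* Kˣ where
  toFun μ := ∏ i, μ i ^ σ i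
  map_one' := by simp only [Pi.one_apply, one_zpow, Finset.prod_const_one]
  map_mul' μ ν := by simp only [Pi.mul_apply, mul_zpow, Finset.prod_mul_distrib]

lemma torusChar_apply (σ : ι → ℤ) (μ : ι → Kˣ) : torusChar σ μ = ∏ i, μ i ^ σ i := rfl

variable (μ : ι → Kˣ)

@[simp]
lemma torusChar_zero : torusChar (0 : ι → ℤ) μ = 1 := by
  simp only [torusChar_apply, Pi.zero_apply, zpow_zero, Finset.prod_const_one]

lemma torusChar_add (σ τ : ι → ℤ) : torusChar (σ + τ) μ = torusChar σ μ * torusChar τ μ := by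
  simp only [torusChar_apply, Pi.add_apply, zpow_add, Finset.prod_mul_distrib]

lemma torusChar_sub (σ τ : ι → ℤ) : torusChar (σ - τ) μ = torusChar σ μ / torusChar τ μ := by
  simp only [torusChar_apply, Pi.sub_apply, zpow_sub, ← div_eq_mul_inv, Finset.prod_div_distrib]

lemma torusChar_nsmul (n : ℕ) (σ : ι → ℤ) : torusChar (n • σ) μ = torusChar σ μ ^ n := by
  simp_rw [torusChar_apply, ← Finset.prod_pow, Pi.smul_apply, nsmul_eq_mul, zpow_mul',
    zpow_natCast]

lemma torusChar_sum {J : Type} (s : Finset J) (σ : J → ι → ℤ) :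
    torusChar (∑ j ∈ s, σ j) μ = ∏ j ∈ s, torusChar (σ j) μ := by
  classical
  induction s using Finset.induction_on with
  | empty => rw [Finset.sum_empty, Finset.prod_empty, torusChar_zero]
  | insert j s hj ih => rw [Finset.sum_insert hj, Finset.prod_insert hj, torusChar_add, ih]

lemma torusChar_single [DecidableEq ι] (i : ι) (n : ℤ) :
    torusChar (Pi.single i n) μ = μ i ^ n := by
  rw [torusChar_apply, Fintype.prod_eq_single i fun j hj => by
    rw [Pi.single_eq_of_ne hj, zpow_zero], Pi.single_eq_same]

lemma torusChar_mulSingle [DecidableEq ι] (σ : ι → ℤ) (i : ι) (s : Kˣ) :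
    torusChar σ (Pi.mulSingle i s) = s ^ σ i := by
  rw [torusChar_apply, Fintype.prod_eq_single i fun j hj => by
    rw [Pi.mulSingle_eq_of_ne hj, one_zpow], Pi.mulSingle_eq_same]

lemma torusChar_pow (σ : ι → ℤ) (s : Kˣ) (d : ι → ℕ) :
    torusChar σ (fun i => s ^ d i) = s ^ ∑ i, σ i * d i := by
  have hsum : s ^ ∑ i, σ i * d i = ∏ i, s ^ (σ i * d i) :=
    map_prod (zpowersHom Kˣ s) (fun i => Multiplicative.ofAdd (σ i * d i)) Finset.univ
  simp only [hsum, torusChar_apply, ← zpow_natCast, ← zpow_mul, mul_comm]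

end Fintype

lemma eq_of_forall_zpow_eq [Infinite K] {m n : ℤ} (H : ∀ s : Kˣ, s ^ m = s ^ n) : m = n := by
  by_contra hmn
  have : NeZero (m - n).natAbs := ⟨Int.natAbs_ne_zero.2 (sub_ne_zero.2 hmn)⟩
  have hroots (s : Kˣ) : s ∈ rootsOfUnity (m - n).natAbs K := by
    have hs : s ^ (m - n) = 1 := by rw [zpow_sub, H, mul_inv_cancel]
    rcases Int.natAbs_eq (m - n) with hd | hd <;> rw [hd] at hs
    · exact_mod_cast hs
    · simpa using hs
  have hunits : Finite Kˣ := Finite.of_surjective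
    (Subtype.val : rootsOfUnity (m - n).natAbs K → Kˣ) fun s => ⟨⟨s, hroots s⟩, rfl⟩
  exact (Set.finite_singleton (0 : K)).infinite_compl
    (Set.finite_coe_iff.1 (Finite.of_equiv Kˣ unitsEquivNeZero))

lemma linearIndependent_torusChar [Infinite K] [Fintype ι] :
    LinearIndependent K fun (σ : ι → ℤ) (μ : ι → Kˣ) => (torusChar σ μ : K) := by
  classical
  refine (linearIndependent_monoidHom (ι → Kˣ) K).comp
    (fun σ : ι → ℤ => (Units.coeHom K).comp (torusChar σ)) fun σ τ H => ?_
  refine funext fun i => eq_of_forall_zpow_eq (K := K) fun s => ?_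
  have hs := DFunLike.congr_fun H (Pi.mulSingle i s)
  simpa only [MonoidHom.comp_apply, torusChar_mulSingle, Units.coeHom_apply, Units.val_inj] using hs

end Characters

section Equivariance

open QuivRep

variable {K : Type} [Field K]

lemma det_blockDiagonal'_eq_prod {I : Type} [Fintype I] [DecidableEq I] {m : I → Type}
    [∀ i, Fintype (m i)] [∀ i, DecidableEq (m i)] (M : ∀ i, Matrix (m i) (m i) K) :
    (Matrix.blockDiagonal' M).det = ∏ i, (M i).det := by
  let := LinearOrder.lift' (Fintype.equivFin I) (Equiv.injective _)
  have htriangular : (Matrix.blockDiagonal' M).BlockTriangular Sigma.fst := fun r c hrc =>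
    Matrix.blockDiagonal'_apply_ne M _ _ hrc.ne'
  rw [htriangular.det_fintype]
  refine Finset.prod_congr rfl fun i _ => ?_
  rw [← Matrix.det_submatrix_equiv_self (Equiv.sigmaSubtype i).symm]
  congr 1
  ext p q
  exact Matrix.blockDiagonal'_apply_eq M i p q

variable {I : Type} [DecidableEq I]

open Kronecker in
/-- The matrix of the map `φ ↦ (φ i * g i)_i` on families of matrices, in the coordinates of
`flatten`. -/
def mulRightMatrix (m : I → ℕ) {n : I → ℕ} (g : ∀ i, Matrix (Fin (n i)) (Fin (n i)) K) :
    Matrix ((i : I) × (Fin (m i) × Fin (n i))) ((i : I) × (Fin (m i) × Fin (n i))) K :=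
  Matrix.blockDiagonal' fun i => (1 : Matrix (Fin (m i)) (Fin (m i)) K) ⊗ₖ (g i).transpose

variable [Fintype I] {m n : I → ℕ}

lemma det_mulRightMatrix (g : ∀ i, Matrix (Fin (n i)) (Fin (n i)) K) :
    (mulRightMatrix m g).det = ∏ i, (g i).det ^ m i := by
  simp only [mulRightMatrix, det_blockDiagonal'_eq_prod, Matrix.det_kronecker, Matrix.det_one,
    one_pow, one_mul, Matrix.det_transpose, Fintype.card_fin]

lemma mulRightMatrix_mulVec_flatten (g : ∀ i, Matrix (Fin (n i)) (Fin (n i)) K)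
    (φ : ∀ i, Matrix (Fin (m i)) (Fin (n i)) K) :
    (mulRightMatrix m g).mulVec (flatten φ) = flatten fun i => φ i * g i := by
  funext ⟨i, p, q⟩
  rw [Matrix.mulVec, dotProduct, Fintype.sum_sigma, Fintype.sum_eq_single i fun j hj => ?_,
    Fintype.sum_prod_type, Fintype.sum_eq_single p fun p' hp => ?_, flatten_apply, Matrix.mul_apply]
  · refine Finset.sum_congr rfl fun q' _ => ?_
    simp [mulRightMatrix, Matrix.blockDiagonal'_apply, flatten_apply, mul_comm]
  · simp [mulRightMatrix, Matrix.blockDiagonal'_apply, hp.symm]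
  · simp [mulRightMatrix, Matrix.blockDiagonal'_apply, hj.symm]

variable {V A : Type} {t h : A → V} {α w : V → ℕ}

lemma matrixDmap_glAct (g : ∀ i, Matrix.GeneralLinearGroup (Fin (α i)) K) (M : RepSpace K t h α)
    (N : RepSpace K t h w) (φ : ∀ i, Matrix (Fin (w i)) (Fin (α i)) K) (a : A) :
    matrixDmap (glAct K t h g M) N φ a =
      matrixDmap M N (fun i => φ i * (g i).1) a * ((g (t a))⁻¹).1 := by
  simp only [matrixDmap, glAct, Matrix.sub_mul, Matrix.mul_assoc, ← Units.val_mul, mul_inv_cancel,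
    Units.val_one, Matrix.mul_one]

variable [Fintype V] [DecidableEq V]

lemma schofieldMatrix_glAct [Fintype A] [DecidableEq A]
    (g : ∀ i, Matrix.GeneralLinearGroup (Fin (α i)) K) (M : RepSpace K t h α)
    (N : RepSpace K t h w) :
    schofieldMatrix K t h (glAct K t h g M) N =
      mulRightMatrix (fun a => w (h a)) (fun a => ((g (t a))⁻¹).1) *
        schofieldMatrix K t h M N * mulRightMatrix w (fun i => (g i).1) := by
  refine Matrix.mulVec_injective (funext fun v => ?_)
  obtain ⟨φ, rfl⟩ := flatten.surjective v
  rw [← Matrix.mulVec_mulVec, ← Matrix.mulVec_mulVec, schofieldMatrix_mulVec_flatten,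
    mulRightMatrix_mulVec_flatten, schofieldMatrix_mulVec_flatten, mulRightMatrix_mulVec_flatten]
  exact congrArg flatten (funext fun a => matrixDmap_glAct g M N φ a)

variable [Fintype A]

lemma neg_weightR_eq_sum (d : V → ℕ) :
    -weightR t h (natZ d) =
      ∑ i, d i • Pi.single i 1 - ∑ a, d (h a) • (Pi.single (t a) 1 : V → ℤ) := by
  funext i
  simp [weightR_apply, natZ, Finset.sum_apply, Pi.single_apply, eq_comm (a := i)]

lemma torusChar_neg_weightR (d : V → ℕ) (μ : V → Kˣ) :
    torusChar (-weightR t h (natZ d)) μ = (∏ a, (μ (t a))⁻¹ ^ d (h a)) * ∏ i, μ i ^ d i := by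
  simp only [neg_weightR_eq_sum, torusChar_sub, torusChar_sum, torusChar_nsmul, torusChar_single,
    zpow_one, inv_pow, Finset.prod_inv_distrib, div_eq_mul_inv, mul_comm]

theorem schofieldSI_mem_SIweight (E : RepSpace K t h w) :
    schofieldSI K t h E ∈ SIweight K t h α (-weightR t h (natZ w)) := by
  classical
  refine ⟨isPolyFun_schofieldSI E, fun g M => ?_⟩
  change _ = (torusChar (-weightR t h (natZ w)) (fun i => (g i).det) : K) * _
  unfold schofieldSI
  split_ifs with hcard
  · have hsub {r c : Type} [Fintype r] [Fintype c] (e : c ≃ r) (R : Matrix r r K)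
        (S : Matrix r c K) (L : Matrix c c K) :
        (R * S * L).submatrix e id = R.submatrix e e * S.submatrix e id * L := by
      rw [Matrix.submatrix_mul_equiv]
      rfl
    rw [schofieldMatrix_glAct, hsub, Matrix.det_mul, Matrix.det_mul,
      Matrix.det_submatrix_equiv_self, det_mulRightMatrix, det_mulRightMatrix, mul_right_comm,
      torusChar_neg_weightR]
    simp only [Units.val_mul, Units.coe_prod, Units.val_pow_eq_pow_val]
    congr 2
  · rw [mul_zero]

end Equivariance

section Invariants

variable {K : Type} [Field K] {V A : Type} {t h : A → V} {α : V → ℕ}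

lemma glAct_mul (g g' : ∀ i, Matrix.GeneralLinearGroup (Fin (α i)) K) (W : RepSpace K t h α) :
    glAct K t h (g * g') W = glAct K t h g (glAct K t h g' W) := by
  funext a
  simp only [glAct, Pi.mul_apply, mul_inv_rev, Units.val_mul, Matrix.mul_assoc]

variable (K t h α) in
/-- The algebra `SI(Q,α)` of polynomial functions on `rep(Q,α)` that are invariant under
`SL(α)`. -/
def invariantSubalgebra : Subalgebra K (RepSpace K t h α → K) where
  carrier := {f | IsPolyFun K t h f ∧ ∀ g : ∀ i, Matrix.GeneralLinearGroup (Fin (α i)) K,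
    (∀ i, Matrix.GeneralLinearGroup.det (g i) = 1) → ∀ W, f (glAct K t h g W) = f W}
  mul_mem' hu hv :=
    ⟨mem_polyFunAlgebra_iff.1 (mul_mem (mem_polyFunAlgebra_iff.2 hu.1)
      (mem_polyFunAlgebra_iff.2 hv.1)), fun g hg W => congrArg₂ (· * ·) (hu.2 g hg W) (hv.2 g hg W)⟩
  add_mem' hu hv :=
    ⟨mem_polyFunAlgebra_iff.1 (add_mem (mem_polyFunAlgebra_iff.2 hu.1)
      (mem_polyFunAlgebra_iff.2 hv.1)), fun g hg W => congrArg₂ (· + ·) (hu.2 g hg W) (hv.2 g hg W)⟩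
  algebraMap_mem' r :=
    ⟨mem_polyFunAlgebra_iff.1 (algebraMap_mem (polyFunAlgebra K t h α) r), fun _ _ _ => rfl⟩

section Fintype

variable [Fintype V] {σ : V → ℤ} {f : RepSpace K t h α → K}

lemma mem_SIweight_iff : f ∈ SIweight K t h α σ ↔ IsPolyFun K t h f ∧
    ∀ (g : ∀ i, Matrix.GeneralLinearGroup (Fin (α i)) K) W,
      f (glAct K t h g W) = torusChar σ (fun i => (g i).det) * f W :=
  Iff.rfl

lemma apply_glAct_of_mem_SIweight (hf : f ∈ SIweight K t h α σ)
    (g : ∀ i, Matrix.GeneralLinearGroup (Fin (α i)) K) (W : RepSpace K t h α) :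
    f (glAct K t h g W) = torusChar σ (fun i => (g i).det) * f W :=
  hf.2 g W

lemma SIweight_le_invariantSubalgebra :
    SIweight K t h α σ ≤ Subalgebra.toSubmodule (invariantSubalgebra K t h α) :=
  fun f hf => ⟨hf.1, fun g hg W => by
    rw [apply_glAct_of_mem_SIweight hf, funext hg]
    exact (congrArg (fun c : Kˣ => (c : K) * f W) (map_one _)).trans (one_mul _)⟩

instance : SetLike.GradedMonoid (SIweight K t h α) where
  one_mem := by
    refine mem_SIweight_iff.2
      ⟨mem_polyFunAlgebra_iff.1 (one_mem (polyFunAlgebra K t h α)), fun g W => ?_⟩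
    rw [torusChar_zero, Units.val_one, one_mul, Pi.one_apply, Pi.one_apply]
  mul_mem σ τ u v hu hv := by
    refine mem_SIweight_iff.2 ⟨mem_polyFunAlgebra_iff.1 (mul_mem (mem_polyFunAlgebra_iff.2 hu.1)
      (mem_polyFunAlgebra_iff.2 hv.1)), fun g W => ?_⟩
    rw [Pi.mul_apply, apply_glAct_of_mem_SIweight hu, apply_glAct_of_mem_SIweight hv,
      mul_mul_mul_comm, torusChar_add, Units.val_mul, Pi.mul_apply]

end Fintype

end Invariants

section Torus

variable {K : Type} [Field K]

section Corner

variable {n : ℕ} (hn : 0 < n)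

/-- The diagonal matrix `diag(c, 1, …, 1)`, which splits the determinant. -/
def cornerGL : Kˣ →* Matrix.GeneralLinearGroup (Fin n) K :=
  (Units.map (Matrix.diagonalRingHom (Fin n) K).toMonoidHom).comp
    (MulEquiv.piUnits.symm.toMonoidHom.comp (MonoidHom.mulSingle (fun _ => Kˣ) ⟨0, hn⟩))

lemma val_cornerGL (c : Kˣ) : (cornerGL hn c).1 =
    Matrix.diagonal fun p => ((Pi.mulSingle ⟨0, hn⟩ c : Fin n → Kˣ) p : K) :=
  rfl

lemma det_cornerGL (c : Kˣ) : (cornerGL hn c).det = c := by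
  ext
  rw [Matrix.GeneralLinearGroup.val_det_apply, val_cornerGL, Matrix.det_diagonal,
    ← Units.coe_prod, Finset.prod_pi_mulSingle']
  simp

end Corner

lemma eval_torusChar_mul {ι κ : Type} [Fintype ι] {wt : κ → ι → ℤ}
    {σ : ι → ℤ} {P : MvPolynomial κ K} (hP : P.IsWeightedHomogeneous wt σ) (μ : ι → Kˣ)
    (x : κ → K) :
    P.eval (fun k => (torusChar (wt k) μ : K) * x k) = torusChar σ μ * P.eval x := by
  rw [MvPolynomial.eval_eq, MvPolynomial.eval_eq, Finset.mul_sum]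
  refine Finset.sum_congr rfl fun m hm => ?_
  rw [← hP (MvPolynomial.mem_support_iff.1 hm), Finsupp.weight_apply, Finsupp.sum, torusChar_sum]
  simp only [mul_pow, Finset.prod_mul_distrib, torusChar_nsmul, Units.coe_prod,
    Units.val_pow_eq_pow_val]
  ring

lemma exists_eq_sum_isWeightedHomogeneous {κ M : Type} [AddCommMonoid M] (wt : κ → M)
    (P : MvPolynomial κ K) :
    ∃ (s : Finset M) (F : M → MvPolynomial κ K), P = ∑ σ ∈ s, F σ ∧
      ∀ σ, (F σ).IsWeightedHomogeneous wt σ := by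
  have hfinite := MvPolynomial.weightedHomogeneousComponent_finsupp (w := wt) P
  refine ⟨hfinite.toFinset, fun σ => MvPolynomial.weightedHomogeneousComponent wt σ P, ?_,
    fun σ => MvPolynomial.weightedHomogeneousComponent_isWeightedHomogeneous σ P⟩
  rw [← finsum_eq_sum _ hfinite, MvPolynomial.sum_weightedHomogeneousComponent]

variable {V A : Type} {t h : A → V} {α : V → ℕ} (hα : ∀ i, 0 < α i)

/-- The splitting of the determinant `GL(α) → (Kˣ)^V` by the matrices `cornerGL`. -/
def cornerTorus (μ : V → Kˣ) (i : V) : Matrix.GeneralLinearGroup (Fin (α i)) K :=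
  cornerGL (hα i) (μ i)

lemma det_cornerTorus (μ : V → Kˣ) : (fun i => (cornerTorus hα μ i).det) = μ :=
  funext fun i => det_cornerGL (hα i) (μ i)

lemma glAct_eq_glAct_cornerTorus {f : RepSpace K t h α → K}
    (hf : f ∈ invariantSubalgebra K t h α)
    (g : ∀ i, Matrix.GeneralLinearGroup (Fin (α i)) K) (W : RepSpace K t h α) :
    f (glAct K t h g W) = f (glAct K t h (cornerTorus hα fun i => (g i).det) W) := by
  set T := cornerTorus hα fun i => (g i).det
  have hdet (i : V) : ((T * g⁻¹) i).det = 1 := by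
    rw [Pi.mul_apply, Pi.inv_apply, map_mul, map_inv, mul_inv_eq_one]
    exact det_cornerGL (hα i) (g i).det
  rw [← hf.2 _ hdet (glAct K t h g W), ← glAct_mul, inv_mul_cancel_right]

/-- The weight of the coordinate `W ↦ W a p q` under the torus `cornerTorus`. -/
def coordWeight [DecidableEq V] (x : (a : A) × (Fin (α (h a)) × Fin (α (t a)))) : V → ℤ :=
  (if x.2.1 = ⟨0, hα _⟩ then Pi.single (h x.1) 1 else 0) -
    if x.2.2 = ⟨0, hα _⟩ then Pi.single (t x.1) 1 else 0

variable [Fintype V]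

lemma glAct_cornerTorus_apply [DecidableEq V] (μ : V → Kˣ) (W : RepSpace K t h α)
    (x : (a : A) × (Fin (α (h a)) × Fin (α (t a)))) :
    glAct K t h (cornerTorus hα μ) W x.1 x.2.1 x.2.2 =
      torusChar (coordWeight hα x) μ * W x.1 x.2.1 x.2.2 := by
  have hcorner (i : V) (p : Fin (α i)) : torusChar (if p = ⟨0, hα i⟩ then Pi.single i 1 else 0) μ =
      (Pi.mulSingle ⟨0, hα i⟩ (μ i) : Fin (α i) → Kˣ) p := by
    rw [Pi.mulSingle_apply]
    split_ifs
    · rw [torusChar_single, zpow_one]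
    · exact torusChar_zero μ
  simp only [glAct, cornerTorus, ← map_inv, val_cornerGL, Matrix.mul_diagonal,
    Matrix.diagonal_mul, coordWeight, torusChar_sub, hcorner, Pi.mulSingle_inv, Pi.inv_apply,
    div_eq_mul_inv, Units.val_mul]
  ring

lemma IsPolyFun.exists_torus_decomposition {f : RepSpace K t h α → K} (hf : IsPolyFun K t h f) :
    ∃ (s : Finset (V → ℤ)) (F : (V → ℤ) → RepSpace K t h α → K), f = ∑ σ ∈ s, F σ ∧
      ∀ σ, IsPolyFun K t h (F σ) ∧
        ∀ μ W, F σ (glAct K t h (cornerTorus hα μ) W) = torusChar σ μ * F σ W := by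
  classical
  obtain ⟨P, hP⟩ := hf
  obtain ⟨s, F, hsum, hF⟩ :=
    exists_eq_sum_isWeightedHomogeneous (coordWeight (t := t) (h := h) hα) P
  refine ⟨s, fun σ W =>
    (F σ).eval fun (x : (a : A) × (Fin (α (h a)) × Fin (α (t a)))) => W x.1 x.2.1 x.2.2,
    funext fun W => ?_, fun σ => ⟨⟨F σ, fun _ => rfl⟩, fun μ W => ?_⟩⟩
  · rw [hP, hsum, map_sum, Finset.sum_apply]
  · simp only [glAct_cornerTorus_apply]
    exact eval_torusChar_mul (hF σ) μ _

lemma invariantSubalgebra_le_iSup_SIweight [Infinite K] (hα : ∀ i, 0 < α i) :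
    Subalgebra.toSubmodule (invariantSubalgebra K t h α) ≤ ⨆ σ, SIweight K t h α σ := by
  intro f hf
  obtain ⟨s, F, hsum, hF⟩ := IsPolyFun.exists_torus_decomposition hα hf.1
  rw [hsum]
  refine sum_mem fun σ hσ => Submodule.mem_iSup_of_mem σ
    (mem_SIweight_iff.2 ⟨(hF σ).1, fun g W => ?_⟩)
  have hexpand (μ : V → Kˣ) (W) : f (glAct K t h (cornerTorus hα μ) W) =
      ∑ σ ∈ s, torusChar σ μ * F σ W := by
    simp only [hsum, Finset.sum_apply, (hF _).2]
  have hrel : ∑ σ ∈ s, (F σ (glAct K t h g W) - torusChar σ (fun i => (g i).det) * F σ W) •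
      (fun μ : V → Kˣ => (torusChar σ μ : K)) = 0 := by
    funext μ
    have hμ : ∑ σ ∈ s, torusChar σ μ * F σ (glAct K t h g W) =
        ∑ σ ∈ s, torusChar σ (fun i => (g i).det * μ i) * F σ W := by
      rw [← hexpand, ← hexpand, ← glAct_mul, glAct_eq_glAct_cornerTorus hα hf]
      congr! with i
      rw [Pi.mul_apply, map_mul, mul_comm]
      exact congrArg _ (det_cornerGL _ _)
    rw [Finset.sum_apply, Pi.zero_apply, ← sub_eq_zero.2 hμ, ← Finset.sum_sub_distrib]
    refine Finset.sum_congr rfl fun σ _ => ?_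
    rw [show (fun i => (g i).det * μ i) = (fun i => (g i).det) * μ from rfl, map_mul,
      Units.val_mul, Pi.smul_apply, smul_eq_mul]
    ring
  have hindep := linearIndependent_torusChar (K := K) (ι := V)
  exact sub_eq_zero.1 (linearIndependent_iff'.1 hindep s _ hrel σ hσ)

end Torus

section OneParameterSubgroups

open QuivRep Polynomial

variable {K : Type} [Field K]

lemma exists_projection_matrix {n : ℕ} (U : Submodule K (Fin n → K)) :
    ∃ (P : Matrix (Fin n) (Fin (Module.finrank K U)) K)
      (R : Matrix (Fin (Module.finrank K U)) (Fin n) K), R * P = 1 ∧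
      (∀ x, P.mulVec x ∈ U) ∧ ∀ v ∈ U, (P * R).mulVec v = v := by
  let b := (Module.finBasis K U).equivFun
  obtain ⟨r, hr⟩ := LinearMap.exists_leftInverse_of_injective (U.subtype ∘ₗ b.symm.toLinearMap)
    (LinearMap.ker_eq_bot.2 (U.injective_subtype.comp b.symm.injective))
  have hr' (x) : r (b.symm x).1 = x := LinearMap.congr_fun hr x
  refine ⟨LinearMap.toMatrix' (U.subtype ∘ₗ b.symm.toLinearMap), LinearMap.toMatrix' r,
    ?_, fun x => ?_, fun v hv => ?_⟩
  · rw [← LinearMap.toMatrix'_comp, hr, LinearMap.toMatrix'_id]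
  · rw [LinearMap.toMatrix'_mulVec]
    exact (b.symm x).2
  · rw [← Matrix.mulVec_mulVec, LinearMap.toMatrix'_mulVec, LinearMap.toMatrix'_mulVec]
    obtain ⟨x, hx⟩ := b.symm.surjective ⟨v, hv⟩
    have hxv : (b.symm x).1 = v := congrArg Subtype.val hx
    rw [← hxv, hr']
    rfl

section Idempotent

variable {m n : Type} [Fintype m] [DecidableEq m] [Fintype n] [DecidableEq n]
  {P : Matrix n m K} {R : Matrix m n K}

lemma det_one_add_smul_mul (hRP : R * P = 1) (s : K) :
    (1 + (s - 1) • (P * R)).det = s ^ Fintype.card m := by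
  rw [← Matrix.smul_mul, Matrix.det_one_add_mul_comm, Matrix.mul_smul, hRP, sub_smul, one_smul,
    add_sub_cancel, Matrix.det_smul, Matrix.det_one, mul_one]

/-- The one-parameter subgroup acting by `s` on the image of the idempotent `P * R` and by `1` on
its kernel. -/
def idempotentGL (hRP : R * P = 1) (s : Kˣ) : Matrix.GeneralLinearGroup n K :=
  .mkOfDetNeZero (1 + ((s : K) - 1) • (P * R)) <| by
    rw [det_one_add_smul_mul hRP]
    exact pow_ne_zero _ s.ne_zero

lemma det_idempotentGL (hRP : R * P = 1) (s : Kˣ) :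
    (idempotentGL hRP s).det = s ^ Fintype.card m :=
  Units.ext (det_one_add_smul_mul hRP s)

end Idempotent

variable {V A : Type} {t h : A → V} {α d : V → ℕ}

lemma glAct_idempotentGL {P : ∀ i, Matrix (Fin (α i)) (Fin (d i)) K}
    {R : ∀ i, Matrix (Fin (d i)) (Fin (α i)) K} (hRP : ∀ i, R i * P i = 1) {M : RepSpace K t h α}
    (hM : ∀ a, P (h a) * R (h a) * (M a * (P (t a) * R (t a))) = M a * (P (t a) * R (t a)))
    (s : Kˣ) : glAct K t h (fun i => idempotentGL (hRP i) s) M =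
      M + ((s : K) - 1) • fun a => P (h a) * R (h a) * M a - M a * (P (t a) * R (t a)) := by
  refine glAct_eq_iff.2 fun a => ?_
  have hidem : P (t a) * R (t a) * (P (t a) * R (t a)) = P (t a) * R (t a) := by
    rw [Matrix.mul_assoc, ← Matrix.mul_assoc (R _), hRP, Matrix.one_mul]
  change (1 + ((s : K) - 1) • (P (h a) * R (h a))) * M a = (M a + ((s : K) - 1) •
    (P (h a) * R (h a) * M a - M a * (P (t a) * R (t a)))) * (1 + ((s : K) - 1) • _)
  have hkill : (P (h a) * R (h a) * M a - M a * (P (t a) * R (t a))) * (P (t a) * R (t a)) = 0 := by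
    rw [Matrix.sub_mul, Matrix.mul_assoc _ (M a), hM, Matrix.mul_assoc (M a), hidem, sub_self]
  rw [Matrix.mul_add, Matrix.mul_one, Matrix.mul_smul, Matrix.add_mul (M a), Matrix.smul_mul _ _
    (P (t a) * R (t a)), hkill, Matrix.add_mul, Matrix.one_mul, Matrix.smul_mul, smul_zero,
    add_zero, smul_sub]
  abel

lemma nonneg_of_eval_eq_zpow_mul [Infinite K] {p : K[X]} {c : K} (hc : c ≠ 0) {n : ℤ}
    (H : ∀ s : Kˣ, p.eval (s : K) = (s ^ n : Kˣ) * c) : 0 ≤ n := by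
  by_contra! hn
  obtain ⟨m, hm⟩ := Int.eq_ofNat_of_zero_le (neg_nonneg.2 hn.le)
  have hpoly : X * (p * X ^ m - C c) = 0 := Polynomial.funext fun s => by
    rcases eq_or_ne s 0 with rfl | hs
    · simp
    · have hs' := H (Units.mk0 s hs)
      have hpow : ((Units.mk0 s hs ^ n : Kˣ) : K) * s ^ m = 1 := by
        rw [← neg_neg n, hm]
        simp [hs]
      simp only [Units.val_mk0] at hs'
      simp only [eval_mul, eval_X, eval_sub, eval_pow, eval_C, hs', eval_zero]
      linear_combination s * c * hpow
  have hzero := congrArg (eval 0) ((mul_eq_zero.1 hpoly).resolve_left X_ne_zero)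
  have hm0 : m ≠ 0 := by omega
  simp [hm0, hc] at hzero

variable [Fintype V]

lemma apply_add_smul_of_mem_SIweight {σ : V → ℤ} {f : RepSpace K t h α → K}
    (hf : f ∈ SIweight K t h α σ) {P : ∀ i, Matrix (Fin (α i)) (Fin (d i)) K}
    {R : ∀ i, Matrix (Fin (d i)) (Fin (α i)) K} (hRP : ∀ i, R i * P i = 1) {M : RepSpace K t h α}
    (hM : ∀ a, P (h a) * R (h a) * (M a * (P (t a) * R (t a))) = M a * (P (t a) * R (t a)))
    (s : Kˣ) :
    f (M + ((s : K) - 1) • fun a => P (h a) * R (h a) * M a - M a * (P (t a) * R (t a))) =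
      (s ^ ∑ i, σ i * d i : Kˣ) * f M := by
  rw [← glAct_idempotentGL hRP hM, apply_glAct_of_mem_SIweight hf]
  simp only [det_idempotentGL, Fintype.card_fin, torusChar_pow]

/- For a subrepresentation `U`, scaling by `s` on `U` has a limit as `s → 0`, so the exponent
`σ(dim U)` by which it scales `f M ≠ 0` is nonnegative. -/
theorem isSemistable_neg_of_mem_SIweight [Infinite K] {σ : V → ℤ} {f : RepSpace K t h α → K}
    (hf : f ∈ SIweight K t h α σ) {M : RepSpace K t h α} (hM : f M ≠ 0) :
    IsSemistable K (-σ) (toRep K t h M) := by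
  simp only [IsSemistable, Pi.neg_apply, neg_mul, Finset.sum_neg_distrib, neg_eq_zero,
    neg_nonpos, dimVec_toRep]
  refine ⟨eq_of_forall_zpow_eq (K := K) fun s => ?_, fun U => ?_⟩
  · have hscalar := apply_add_smul_of_mem_SIweight hf (P := fun i => 1) (R := fun i => 1)
      (fun i => Matrix.one_mul 1) (M := M) (fun a => by simp only [Matrix.one_mul]) s
    have hzero : (fun a => (1 : Matrix (Fin (α (h a))) (Fin (α (h a))) K) * 1 * M a -
        M a * ((1 : Matrix (Fin (α (t a))) (Fin (α (t a))) K) * 1)) = (0 : RepSpace K t h α) :=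
      funext fun a => by
        rw [Matrix.mul_one, Matrix.one_mul, Matrix.mul_one, Matrix.mul_one, sub_self,
          Pi.zero_apply]
    rw [hzero, smul_zero, add_zero] at hscalar
    rw [zpow_zero]
    exact Units.ext (mul_right_cancel₀ hM (hscalar.symm.trans (one_mul _).symm))
  · choose P R hRP hP hPR using fun i => exists_projection_matrix (U.sub i)
    have hU (a : A) : P (h a) * R (h a) * (M a * (P (t a) * R (t a))) =
        M a * (P (t a) * R (t a)) := by
      refine Matrix.mulVec_injective (funext fun x => ?_)
      have hmem : (M a * (P (t a) * R (t a))).mulVec x ∈ U.sub (h a) := by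
        rw [← Matrix.mulVec_mulVec, ← Matrix.mulVec_mulVec]
        exact U.le a _ (hP (t a) _)
      rw [← Matrix.mulVec_mulVec]
      exact hPR (h a) _ hmem
    obtain ⟨p, hp⟩ := hf.1.exists_polynomial_line M
      fun a => P (h a) * R (h a) * M a - M a * (P (t a) * R (t a))
    refine nonneg_of_eval_eq_zpow_mul (p := p.comp (X - 1)) hM fun s => ?_
    rw [eval_comp, eval_sub, eval_X, eval_one, hp]
    exact apply_add_smul_of_mem_SIweight hf hRP hU s

end OneParameterSubgroups

section Generators

open QuivRep

section TorusOrbit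

variable {K : Type} [Field K] [Infinite K] {ι V : Type} [Fintype V]

lemma eq_zero_of_eval_torusChar_mul_eq_zero {χ : ι → V → ℤ} (hχ : LinearIndependent ℤ χ)
    {x : ι → K} (hx : ∀ j, x j ≠ 0) {p : MvPolynomial ι K}
    (H : ∀ μ : V → Kˣ, p.eval (fun j => (torusChar (χ j) μ : K) * x j) = 0) : p = 0 := by
  have hinj : Function.Injective (Finsupp.weight χ) :=
    hχ.restrict_scalars (R := ℕ) fun m n hmn => by simpa using hmn
  have hindep := (linearIndependent_torusChar (K := K) (ι := V)).comp _ hinj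
  have hrel : ∑ d ∈ p.support, (MvPolynomial.monomial d (p.coeff d)).eval x •
      (fun μ : V → Kˣ => (torusChar (Finsupp.weight χ d) μ : K)) = 0 := by
    funext μ
    rw [Finset.sum_apply, Pi.zero_apply, ← H μ]
    conv_rhs => rw [← MvPolynomial.support_sum_monomial_coeff p, map_sum]
    refine Finset.sum_congr rfl fun d _ => ?_
    rw [eval_torusChar_mul (MvPolynomial.isWeightedHomogeneous_monomial χ d _ rfl), Pi.smul_apply,
      smul_eq_mul, mul_comm]
  refine MvPolynomial.support_eq_empty.1 (Finset.eq_empty_of_forall_notMem fun d hd => ?_)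
  have hd0 := linearIndependent_iff'.1 hindep _ _ hrel d hd
  rw [MvPolynomial.eval_monomial, mul_eq_zero] at hd0
  exact hd0.elim (MvPolynomial.mem_support_iff.1 hd)
    (Finset.prod_ne_zero_iff.2 fun j _ => pow_ne_zero _ (hx j))

end TorusOrbit

variable {K : Type} [Field K] {V A : Type} [Fintype V] {t h : A → V} {α : V → ℕ}
  {M : RepSpace K t h α} {ι : Type}

lemma algebraicIndependent_of_mem_SIweight [Infinite K] (hα : ∀ i, 0 < α i) {χ : ι → V → ℤ}
    (hχ : LinearIndependent ℤ χ) {c : ι → RepSpace K t h α → K}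
    (hc : ∀ j, c j ∈ SIweight K t h α (χ j)) (hM : ∀ j, c j M ≠ 0) :
    AlgebraicIndependent K c := by
  refine algebraicIndependent_iff.2 fun p hp =>
    eq_zero_of_eval_torusChar_mul_eq_zero hχ hM fun μ => ?_
  have hμ := congrFun hp (glAct K t h (cornerTorus hα μ) M)
  simpa only [aeval_eq_eval_apply, apply_glAct_of_mem_SIweight (hc _), det_cornerTorus,
    Pi.zero_apply] using hμ

lemma eq_zero_of_mem_SIweight [Infinite K] [Finite A]
    (hM : ExtVanishes (toRep K t h M) (toRep K t h M)) {σ : V → ℤ} {f : RepSpace K t h α → K}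
    (hf : f ∈ SIweight K t h α σ) (hfM : f M = 0) : f = 0 :=
  hf.1.eq_zero_of_glAct_eq_zero hM fun g => by
    rw [apply_glAct_of_mem_SIweight hf, hfM, mul_zero]

lemma eq_div_smul_of_mem_SIweight [Infinite K] [Finite A]
    (hM : ExtVanishes (toRep K t h M) (toRep K t h M)) {σ : V → ℤ} {f g : RepSpace K t h α → K}
    (hf : f ∈ SIweight K t h α σ) (hg : g ∈ SIweight K t h α σ) (hgM : g M ≠ 0) :
    f = (f M / g M) • g := by
  refine sub_eq_zero.1 (eq_zero_of_mem_SIweight hM (sub_mem hf (Submodule.smul_mem _ _ hg)) ?_)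
  rw [Pi.sub_apply, Pi.smul_apply, smul_eq_mul, div_mul_cancel₀ _ hgM, sub_self]

variable [DecidableEq V] [Fintype A] {w : ι → V → ℕ} {E : ∀ j, RepSpace K t h (w j)}

namespace QuivRep.IsStableSystem

lemma schofieldSI_apply_ne_zero
    (hE : IsStableSystem (toRep K t h M) fun j => toRep K t h (E j))
    (hM : ExtVanishes (toRep K t h M) (toRep K t h M)) (j : ι) : schofieldSI K t h (E j) M ≠ 0 := by
  refine schofieldSI_ne_zero ?_ ((hE.isStableFor j).isPerp hM).homVanishes
  simpa only [euler, dimVec_toRep] using (hE.isStableFor j).euler_eq_zero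

variable [IsAlgClosed K]

theorem algebraicIndependent_schofieldSI
    (hE : IsStableSystem (toRep K t h M) fun j => toRep K t h (E j)) (hQ : Acyclic t h)
    (hα : ∀ i, 0 < α i) (hM : ExtVanishes (toRep K t h M) (toRep K t h M)) :
    AlgebraicIndependent K
      fun j => (schofieldSI K t h (E j) : RepSpace K t h α → K) := by
  have hindep := hE.linearIndependent_weightR hQ (by rwa [dimVec_toRep]) hM
  simp only [dimVec_toRep] at hindep
  exact algebraicIndependent_of_mem_SIweight hα hindep.neg
    (fun j => schofieldSI_mem_SIweight (E j)) (hE.schofieldSI_apply_ne_zero hM)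

theorem SIweight_le_adjoin
    (hE : IsStableSystem (toRep K t h M) fun j => toRep K t h (E j)) (hQ : Acyclic t h)
    (hα : ∀ i, 0 < α i) (hM : ExtVanishes (toRep K t h M) (toRep K t h M)) (σ : V → ℤ) :
    SIweight K t h α σ ≤ Subalgebra.toSubmodule (Algebra.adjoin K
      (Set.range fun j => (schofieldSI K t h (E j) : RepSpace K t h α → K))) := by
  have := (hE.linearIndependent_weightR hQ (by rwa [dimVec_toRep]) hM).finite_of_isNoetherian
  have := Fintype.ofFinite ι
  intro f hf
  rcases eq_or_ne (f M) 0 with hfM | hfM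
  · rw [eq_zero_of_mem_SIweight hM hf hfM]
    exact zero_mem _
  obtain ⟨n, hn⟩ := hE.exists_eq_sum_weightR hQ (by rwa [dimVec_toRep]) hM
    (isSemistable_neg_of_mem_SIweight hf hfM)
  have hσ : σ = ∑ j, n j • -weightR t h (natZ (w j)) := by
    simpa only [dimVec_toRep, smul_neg, Finset.sum_neg_distrib, natCast_zsmul, neg_eq_iff_eq_neg]
      using hn
  have hmem : ∏ j, (schofieldSI K t h (E j) : RepSpace K t h α → K) ^ n j ∈
      SIweight K t h α σ := by
    rw [hσ]
    exact SetLike.prod_pow_mem_graded _ _ _ _ fun j _ => schofieldSI_mem_SIweight (E j)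
  rw [eq_div_smul_of_mem_SIweight hM hf hmem ?_]
  · refine Submodule.smul_mem _ _ ?_
    rw [Subalgebra.mem_toSubmodule]
    exact prod_mem fun j _ => pow_mem (Algebra.subset_adjoin (Set.mem_range_self j)) _
  · rw [Finset.prod_apply, Finset.prod_ne_zero_iff]
    exact fun j _ => pow_ne_zero _ (hE.schofieldSI_apply_ne_zero hM j)

theorem invariantSubalgebra_eq_adjoin
    (hE : IsStableSystem (toRep K t h M) fun j => toRep K t h (E j)) (hQ : Acyclic t h)
    (hα : ∀ i, 0 < α i) (hM : ExtVanishes (toRep K t h M) (toRep K t h M)) :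
    invariantSubalgebra K t h α = Algebra.adjoin K
      (Set.range fun j => (schofieldSI K t h (E j) : RepSpace K t h α → K)) :=
  le_antisymm
    ((invariantSubalgebra_le_iSup_SIweight hα).trans (iSup_le (hE.SIweight_le_adjoin hQ hα hM)))
    (Algebra.adjoin_le (Set.range_subset_iff.2 fun j =>
      SIweight_le_invariantSubalgebra (schofieldSI_mem_SIweight (E j))))

end QuivRep.IsStableSystem

theorem stmt7_general [IsAlgClosed K] (hQ : Acyclic t h) (hα : ∀ i, 0 < α i)
    (hpre : ∃ X : QuivRep K V A t h, X.dimVec = α ∧ X.IsRigid)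
    (hstab : ∀ j, IsStable K (weightL t h (natZ α)) (toRep K t h (E j)))
    (hnoniso : ∀ j k, j ≠ k → ¬ RepIso K (toRep K t h (E j)) (toRep K t h (E k)))
    (hall : ∀ X : QuivRep K V A t h, IsStable K (weightL t h (natZ α)) X →
      ∃ j, RepIso K X (toRep K t h (E j))) :
    AlgebraicIndependent K (fun j => (schofieldSI K t h (E j) : RepSpace K t h α → K)) ∧
    {f : RepSpace K t h α → K | IsPolyFun K t h f ∧
        ∀ g : ∀ i, Matrix.GeneralLinearGroup (Fin (α i)) K,
          (∀ i, Matrix.GeneralLinearGroup.det (g i) = 1) →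
            ∀ W, f (glAct K t h g W) = f W} =
      ↑(Algebra.adjoin K
        (Set.range fun j => (schofieldSI K t h (E j) : RepSpace K t h α → K))) := by
  obtain ⟨X, rfl, hX⟩ := hpre
  obtain ⟨M, hXM⟩ := exists_repIso_toRep X
  have hM : ExtVanishes (toRep K t h M) (toRep K t h M) := hX.extVanishes.of_repIso hXM
  have hE : IsStableSystem (toRep K t h M) fun j => toRep K t h (E j) := by
    constructor <;> simpa only [IsStableFor, dimVec_toRep]
  exact ⟨hE.algebraicIndependent_schofieldSI hQ hα hM,
    congrArg SetLike.coe (hE.invariantSubalgebra_eq_adjoin hQ hα hM)⟩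

end Generators

/-- For a sincere pre-homogeneous `α`, with `E_1, …, E_l` the pairwise
non-isomorphic `⟨α,·⟩`-stable representations, the Schofield semi-invariants `c_{E_i}`
are algebraically independent and `SI(Q,α) = K[c_{E_1}, …, c_{E_l}]`. -/
theorem stmt7 [IsAlgClosed K] [CharZero K] [DecidableEq A] (t h : A → V)
    (hQ : Acyclic t h)
    (α : V → ℕ) (hsinc : ∀ i, 0 < α i)
    (hpre : ∃ X : QuivRep K V A t h, X.dimVec = α ∧ X.IsRigid)
    (l : ℕ) (w : Fin l → V → ℕ) (E : ∀ j, RepSpace K t h (w j))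
    (hstab : ∀ j, IsStable K (weightL t h (natZ α)) (toRep K t h (E j)))
    (hnoniso : ∀ j k, j ≠ k → ¬ RepIso K (toRep K t h (E j)) (toRep K t h (E k)))
    (hall : ∀ X : QuivRep K V A t h, IsStable K (weightL t h (natZ α)) X →
      ∃ j, RepIso K X (toRep K t h (E j))) :
    AlgebraicIndependent K
      (fun j : Fin l => (schofieldSI K t h (E j) : RepSpace K t h α → K)) ∧
    {f : RepSpace K t h α → K | IsPolyFun K t h f ∧
        ∀ g : ∀ i, Matrix.GeneralLinearGroup (Fin (α i)) K,
          (∀ i, Matrix.GeneralLinearGroup.det (g i) = 1) →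
            ∀ W, f (glAct K t h g W) = f W} =
      ↑(Algebra.adjoin K
        (Set.range fun j : Fin l => (schofieldSI K t h (E j) : RepSpace K t h α → K))) :=
  stmt7_general hQ hsinc hpre hstab hnoniso hall

end
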